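/- Regret of Weighted OFUL: under the stated linear bandit setting with weighted ridge regression, for any 0 < δ < 1, with probability at least 1 − δ the pseudo-regret satisfies ∑_{t=1}^T (⟨a_t*, μ*⟩ − ⟨a_t, μ*⟩) ≤ 4d·log(1 + TA²/(dλ σ̄²_{min,T})) + 2·√(2d·log(1 + TA²/(dλ σ̄²_{min,T}))) · √(∑_{t=1}^T (β̂_{t-1} + √λ·B)² σ̄_t²), where σ̄_{min,t} = min_{1≤i≤t} σ̄_i. -/

import Mathlib

open MeasureTheory Matrix Finset

/-- `√(vᵀ A v)`, the (semi-)norm of `v` induced by a positive definite matrix `A`. -/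
noncomputable def matNorm {d : ℕ} (A : Matrix (Fin d) (Fin d) ℝ) (v : Fin d → ℝ) : ℝ :=
  Real.sqrt (v ⬝ᵥ (A *ᵥ v))

/-- The weighted Gram matrix `A_t = λ I + ∑_{i=1}^t σ̄_i^{-2} a_i a_iᵀ`. -/
noncomputable def wGram {d : ℕ} (lam : ℝ) (a : ℕ → Fin d → ℝ) (sb : ℕ → ℝ) (t : ℕ) :
    Matrix (Fin d) (Fin d) ℝ :=
  lam • (1 : Matrix (Fin d) (Fin d) ℝ) +
    ∑ i ∈ Finset.Icc 1 t, ((sb i) ^ 2)⁻¹ • vecMulVec (a i) (a i)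

/-- The weighted ridge regression estimator `μ̂_t = A_t^{-1} ∑_{i=1}^t σ̄_i^{-2} r_i a_i`. -/
noncomputable def wEst {d : ℕ} (lam : ℝ) (a : ℕ → Fin d → ℝ) (sb : ℕ → ℝ) (r : ℕ → ℝ)
    (t : ℕ) : Fin d → ℝ :=
  (wGram lam a sb t)⁻¹ *ᵥ ∑ i ∈ Finset.Icc 1 t, (((sb i) ^ 2)⁻¹ * r i) • a i

/-- `σ̄_{min,t} = min_{1 ≤ i ≤ t} σ̄_i`. -/
noncomputable def sbMin (sb : ℕ → ℝ) (t : ℕ) : ℝ := sInf (sb '' Set.Icc 1 t)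

/-- `β̂_0 = 0` and
`β̂_t = 8√(d log(1 + tA²/(dλσ̄²_{min,t})) log(4t²/δ)) + 4(R/σ̄_{min,t}) log(4t²/δ)` for `t ≥ 1`. -/
noncomputable def betaHat (d : ℕ) (A R lam δ : ℝ) (sb : ℕ → ℝ) (t : ℕ) : ℝ :=
  if t = 0 then 0 else
    8 * Real.sqrt ((d : ℝ) *
        Real.log (1 + (t : ℝ) * A ^ 2 / ((d : ℝ) * lam * (sbMin sb t) ^ 2)) *
        Real.log (4 * (t : ℝ) ^ 2 / δ)) +
      4 * (R / sbMin sb t) * Real.log (4 * (t : ℝ) ^ 2 / δ)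

/-- The confidence set `C_t = {μ : ‖μ − μ̂_t‖_{A_t} ≤ β̂_t + √λ B}`. -/
noncomputable def confSet {d : ℕ} (lam B βh : ℝ) (At : Matrix (Fin d) (Fin d) ℝ)
    (μh : Fin d → ℝ) : Set (Fin d → ℝ) :=
  {μ | matNorm At (μ - μh) ≤ βh + Real.sqrt lam * B}

/-!
Let `x = a_i / σ̄_i`, `η = ε_i / σ̄_i` be the scaled actions and noise. By the Sherman–Morrison
formula `N_t = ‖∑_{i≤t} η_i x_i‖`, in the norm of `A_t⁻¹`, satisfies
`N_{t+1}² ≤ N_t² + 2uη + pη²`, where `w` is the squared norm of the new `x` under `A_t⁻¹`,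
`p = w / (1 + w)`, and `u² ≤ p (1 - p) N_t²`.

No stopping argument is needed to bound `N_t`. With the data-dependent threshold
`b_t = 2√(ℓ ∑ p) + ρ_t ℓ`, the expectation of `exp (ℓ N_{t+1} / b_t)` grows by at most `e^{3ℓ/2}`
per step: on `N_t ≤ b_t` the new moment itself is at most `e^ℓ · e^{ℓ/2}`, and on `N_t > b_t` the
growth of the threshold, `b_t (b_t - b_{t-1}) ≥ 2pℓ`, absorbs the variance of the new noise.
Markov's inequality at `N_{t+1} > 4 b_t` gives probability at most `(t + 1) e^{-5ℓ/2}`, which for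
`ℓ = log (4 (t + 1)² / δ)` is below the telescoping `δ (1/(t+1) - 1/(t+2))`.

So `μ*` lies in all confidence sets at once with probability `1 - δ`. Optimism then bounds the
regret of a round by twice the radius times the width of the action, and the elliptical potential
lemma with the Cauchy–Schwarz inequality sums the rounds.
-/

namespace WeightedOFUL

/-! ### One step of the recursion -/

section Scalar

lemma le_add_div_of_sq_le {N X r : ℝ} (hX : 0 < X) (h : N ^ 2 ≤ X ^ 2 + r) :
    N ≤ X + r / (2 * X) := by
  rw [← sub_le_iff_le_add', le_div_iff₀ (by positivity)]
  linarith [sq_nonneg (N - X)]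

lemma abs_add_sq_le_one {c p z : ℝ} (hc : c ^ 2 ≤ p * (1 - p)) (hp : p ∈ Set.Icc 0 1)
    (hz : |z| ≤ 1) : |c * z + p * z ^ 2 / 2| ≤ 1 := by
  have hc_half : |c| ≤ 1 / 2 :=
    abs_le_of_sq_le_sq (by linarith [sq_nonneg (p - 1 / 2)]) (by norm_num)
  have hz_sq : z ^ 2 ≤ 1 := (sq_le_one_iff_abs_le_one z).mpr hz
  calc |c * z + p * z ^ 2 / 2| ≤ |c| * |z| + p * z ^ 2 / 2 := by
        rw [← abs_mul]
        refine (abs_add_le _ _).trans_eq ?_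
        rw [abs_of_nonneg (div_nonneg (mul_nonneg hp.1 (sq_nonneg z)) zero_le_two)]
    _ ≤ 1 / 2 * 1 + 1 * 1 / 2 := by
        gcongr
        exact hp.2
    _ = 1 := by norm_num

lemma exp_add_sq_le {c p z : ℝ} (hc : c ^ 2 ≤ p * (1 - p)) (hp : p ∈ Set.Icc 0 1)
    (hz : |z| ≤ 1) : Real.exp (c * z + p * z ^ 2 / 2) ≤ 1 + c * z + 2 * p * z ^ 2 := by
  set y := c * z + p * z ^ 2 / 2 with hy
  have hz_sq : z ^ 2 ≤ 1 := (sq_le_one_iff_abs_le_one z).mpr hz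
  have hfactor : (c + p * z / 2) ^ 2 ≤ 5 / 4 * p := by
    have hpz : (p * z / 2) ^ 2 ≤ p ^ 2 / 4 := by
      linarith [mul_le_mul_of_nonneg_left hz_sq (sq_nonneg p)]
    linarith [sq_nonneg (c / 2 - 2 * (p * z / 2))]
  have hy_sq : y ^ 2 ≤ 5 / 4 * p * z ^ 2 := by
    calc y ^ 2 = (c + p * z / 2) ^ 2 * z ^ 2 := by rw [hy]; ring
      _ ≤ 5 / 4 * p * z ^ 2 := by gcongr
  have hexp : Real.exp y - 1 - y ≤ y ^ 2 :=
    (le_abs_self _).trans (Real.abs_exp_sub_one_sub_id_le (abs_add_sq_le_one hc hp hz))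
  linarith [mul_nonneg hp.1 (sq_nonneg z)]

variable {N N' X p u η θ : ℝ}

lemma sq_div_le_of_sq_le (hX : 0 < X) (hN : 0 ≤ N) (hNX : N ≤ X) (hp : p ∈ Set.Icc 0 1)
    (hu : u ^ 2 ≤ p * (1 - p) * N ^ 2) : (u / X) ^ 2 ≤ p * (1 - p) := by
  have hp_var : 0 ≤ p * (1 - p) := mul_nonneg hp.1 (sub_nonneg.mpr hp.2)
  rw [div_pow, div_le_iff₀ (by positivity)]
  exact hu.trans (by gcongr)

lemma mul_le_of_recursion (hX : 0 < X) (hN : 0 ≤ N) (hNX : N ≤ X) (hθ : 0 ≤ θ)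
    (hθX : 1 ≤ θ * X) (hp : 0 ≤ p) (hrec : N' ^ 2 ≤ N ^ 2 + 2 * u * η + p * η ^ 2) :
    θ * N' ≤ θ * X + (u / X * (θ * η) + p * (θ * η) ^ 2 / 2) := by
  have hlin : N' ≤ X + (2 * u * η + p * η ^ 2) / (2 * X) :=
    le_add_div_of_sq_le hX (by linarith [pow_le_pow_left₀ hN hNX 2])
  have hquad : θ * (p * η ^ 2 / (2 * X)) ≤ p * (θ * η) ^ 2 / 2 := by
    rw [mul_div_assoc', div_le_div_iff₀ (by positivity) two_pos]
    nlinarith [mul_le_mul_of_nonneg_left hθX (by positivity : 0 ≤ θ * p * η ^ 2)]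
  calc θ * N' ≤ θ * (X + (2 * u * η + p * η ^ 2) / (2 * X)) := by gcongr
    _ = θ * X + u / X * (θ * η) + θ * (p * η ^ 2 / (2 * X)) := by field_simp; ring
    _ ≤ θ * X + (u / X * (θ * η) + p * (θ * η) ^ 2 / 2) := by linarith

lemma exp_mul_le_of_recursion (hX : 0 < X) (hN : 0 ≤ N) (hNX : N ≤ X) (hθ : 0 ≤ θ)
    (hθX : 1 ≤ θ * X) (hp : p ∈ Set.Icc 0 1) (hη : |θ * η| ≤ 1)
    (hu : u ^ 2 ≤ p * (1 - p) * N ^ 2) (hrec : N' ^ 2 ≤ N ^ 2 + 2 * u * η + p * η ^ 2) :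
    Real.exp (θ * N') ≤
      Real.exp (θ * X) * (1 + u / X * (θ * η) + 2 * p * (θ * η) ^ 2) := by
  calc Real.exp (θ * N')
      ≤ Real.exp (θ * X + (u / X * (θ * η) + p * (θ * η) ^ 2 / 2)) :=
        Real.exp_le_exp.mpr (mul_le_of_recursion hX hN hNX hθ hθX hp.1 hrec)
    _ ≤ _ := by
        rw [Real.exp_add]
        gcongr
        exact exp_add_sq_le (sq_div_le_of_sq_le hX hN hNX hp hu) hp hη

lemma mul_le_add_one_of_recursion (hX : 0 < X) (hN : 0 ≤ N) (hNX : N ≤ X) (hθ : 0 ≤ θ)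
    (hθX : 1 ≤ θ * X) (hp : p ∈ Set.Icc 0 1) (hη : |θ * η| ≤ 1)
    (hu : u ^ 2 ≤ p * (1 - p) * N ^ 2) (hrec : N' ^ 2 ≤ N ^ 2 + 2 * u * η + p * η ^ 2) :
    θ * N' ≤ θ * X + 1 :=
  (mul_le_of_recursion hX hN hNX hθ hθX hp.1 hrec).trans <| by
    gcongr
    exact (le_abs_self _).trans
      (abs_add_sq_le_one (sq_div_le_of_sq_le hX hN hNX hp hu) hp hη)

end Scalar

/-! ### The threshold -/

/-- The deviation threshold `2√(vℓ) + ρℓ` of Bernstein type for accumulated variance `v`, noise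
bound `ρ` and confidence level `e^{-ℓ}`. -/
noncomputable def threshold (ℓ v ρ : ℝ) : ℝ := 2 * √(v * ℓ) + ρ * ℓ

section Threshold

variable {ℓ v ρ p ρ' N : ℝ}

lemma threshold_pos (hℓ : 0 < ℓ) (hρ : 0 < ρ) : 0 < threshold ℓ v ρ := by
  unfold threshold; positivity

lemma threshold_mono (hℓ : 0 ≤ ℓ) {v' : ℝ} (hv : v ≤ v') (hρ : ρ ≤ ρ') :
    threshold ℓ v ρ ≤ threshold ℓ v' ρ' := by
  unfold threshold; gcongr

lemma mul_le_threshold : ρ * ℓ ≤ threshold ℓ v ρ :=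
  le_add_of_nonneg_left (by positivity)

lemma four_mul_le_threshold_sq (hv : 0 ≤ v) (hℓ : 0 ≤ ℓ) (hρ : 0 ≤ ρ) :
    4 * (v * ℓ) ≤ threshold ℓ v ρ ^ 2 := by
  calc 4 * (v * ℓ) = (2 * √(v * ℓ)) ^ 2 := by
        rw [mul_pow, Real.sq_sqrt (mul_nonneg hv hℓ)]; norm_num
    _ ≤ threshold ℓ v ρ ^ 2 := by
        gcongr
        exact le_add_of_nonneg_right (mul_nonneg hρ hℓ)

lemma two_mul_le_threshold_mul_sub (hℓ : 0 ≤ ℓ) (hv : 0 ≤ v) (hp : 0 ≤ p) (hρ : 0 ≤ ρ)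
    (hρ' : ρ ≤ ρ') :
    2 * (p * ℓ) ≤ threshold ℓ (v + p) ρ' * (threshold ℓ (v + p) ρ' - threshold ℓ v ρ) := by
  have hs : √(v * ℓ) ^ 2 = v * ℓ := Real.sq_sqrt (by positivity)
  have hs' : √((v + p) * ℓ) ^ 2 = (v + p) * ℓ := Real.sq_sqrt (by positivity)
  have hss' : √(v * ℓ) ≤ √((v + p) * ℓ) := Real.sqrt_le_sqrt (by gcongr; linarith)
  have hρℓ : ρ * ℓ ≤ ρ' * ℓ := by gcongr
  calc 2 * (p * ℓ) ≤ (2 * √((v + p) * ℓ)) * (2 * (√((v + p) * ℓ) - √(v * ℓ))) := by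
        nlinarith [Real.sqrt_nonneg (v * ℓ)]
    _ ≤ _ := by
        unfold threshold
        gcongr
        · linarith [mul_nonneg hρ hℓ, Real.sqrt_nonneg ((v + p) * ℓ)]
        · linarith [mul_nonneg hρ hℓ]
        · linarith

lemma two_mul_div_threshold_sq_mul_le (hℓ : 0 < ℓ) (hp : 0 ≤ p) (hpv : p ≤ v) (hρ : 0 < ρ) :
    2 * (ℓ / threshold ℓ v ρ) ^ 2 * p ≤ ℓ / 2 := by
  have hb := threshold_pos (v := v) hℓ hρ
  have hsq := four_mul_le_threshold_sq (hp.trans hpv) hℓ.le hρ.le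
  rw [div_pow, mul_div_assoc', div_mul_eq_mul_div, div_le_div_iff₀ (by positivity) two_pos]
  calc 2 * ℓ ^ 2 * p * 2 ≤ 2 * ℓ ^ 2 * v * 2 := by gcongr
    _ = ℓ * (4 * (v * ℓ)) := by ring
    _ ≤ ℓ * threshold ℓ v ρ ^ 2 := by gcongr

-- Once `N` exceeds the threshold, the growth of the threshold pays for the variance.
lemma div_threshold_mul_add_le (hℓ : 0 < ℓ) (hv : 0 ≤ v) (hp : 0 ≤ p) (hρ : 0 < ρ)
    (hρ' : ρ ≤ ρ') (hN : threshold ℓ (v + p) ρ' ≤ N) :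
    ℓ / threshold ℓ (v + p) ρ' * N + 2 * (ℓ / threshold ℓ (v + p) ρ') ^ 2 * p ≤
      ℓ / threshold ℓ v ρ * N := by
  have hgrowth := two_mul_le_threshold_mul_sub hℓ.le hv hp hρ.le hρ'
  have hbb' : threshold ℓ v ρ ≤ threshold ℓ (v + p) ρ' :=
    threshold_mono hℓ.le (by linarith) hρ'
  have hb := threshold_pos (v := v) hℓ hρ
  have hb' := threshold_pos (v := v + p) hℓ (hρ.trans_le hρ')
  generalize threshold ℓ (v + p) ρ' = b' at *
  generalize threshold ℓ v ρ = b at *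
  calc ℓ / b' * N + 2 * (ℓ / b') ^ 2 * p
      = ℓ / b' * N + ℓ / b' * ((2 * (p * ℓ)) / b') := by ring
    _ ≤ ℓ / b' * N + ℓ / b' * (N * (b' - b) / b) := by
        have hgap : 0 ≤ b' - b := sub_nonneg.mpr hbb'
        gcongr _ + _ * ?_
        exact div_le_div₀ (mul_nonneg (hb'.le.trans hN) hgap)
          (hgrowth.trans (by gcongr)) hb hbb'
    _ = ℓ / b * N := by field_simp; ring

lemma exp_max_mul_le_of_le (hℓ : 0 < ℓ) (hp : 0 ≤ p) (hpv : p ≤ v) (hρ : 0 < ρ)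
    (hN : N ≤ threshold ℓ v ρ) :
    Real.exp (ℓ / threshold ℓ v ρ * max N (threshold ℓ v ρ)) *
      (1 + 2 * (ℓ / threshold ℓ v ρ) ^ 2 * p) ≤ Real.exp (3 / 2 * ℓ) := by
  rw [max_eq_right hN, div_mul_cancel₀ _ (threshold_pos hℓ hρ).ne']
  calc Real.exp ℓ * (1 + 2 * (ℓ / threshold ℓ v ρ) ^ 2 * p)
      ≤ Real.exp ℓ * Real.exp (ℓ / 2) := by
        gcongr
        linarith [two_mul_div_threshold_sq_mul_le hℓ hp hpv hρ, Real.add_one_le_exp (ℓ / 2)]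
    _ = Real.exp (3 / 2 * ℓ) := by rw [← Real.exp_add]; ring_nf

lemma exp_max_mul_le (hℓ : 0 < ℓ) (hv : 0 ≤ v) (hp : 0 ≤ p) (hρ : 0 < ρ) (hρ' : ρ ≤ ρ') :
    Real.exp (ℓ / threshold ℓ (v + p) ρ' * max N (threshold ℓ (v + p) ρ')) *
      (1 + 2 * (ℓ / threshold ℓ (v + p) ρ') ^ 2 * p) ≤
      Real.exp (ℓ / threshold ℓ v ρ * N) + Real.exp (3 / 2 * ℓ) := by
  rcases le_total N (threshold ℓ (v + p) ρ') with hN | hN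
  · exact (exp_max_mul_le_of_le hℓ hp (by linarith) (hρ.trans_le hρ') hN).trans
      (le_add_of_nonneg_left (Real.exp_nonneg _))
  · rw [max_eq_left hN]
    refine le_trans ?_ (le_add_of_nonneg_right (Real.exp_nonneg _))
    calc _ ≤ Real.exp (ℓ / threshold ℓ (v + p) ρ' * N) *
          Real.exp (2 * (ℓ / threshold ℓ (v + p) ρ') ^ 2 * p) := by
          gcongr
          rw [add_comm]
          exact Real.add_one_le_exp _
      _ ≤ Real.exp (ℓ / threshold ℓ v ρ * N) := by
          rw [← Real.exp_add]
          exact Real.exp_le_exp.mpr (div_threshold_mul_add_le hℓ hv hp hρ hρ' hN)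

end Threshold

/-! ### Exponential moments of the normalized noise -/

section Integral

variable {Ω : Type*} {𝒢 m : MeasurableSpace Ω} {P : Measure Ω} [IsFiniteMeasure P]
  {f g s : Ω → ℝ}

lemma integral_mul_eq_zero_of_condExp (h𝒢 : 𝒢 ≤ m) (hf : StronglyMeasurable[𝒢] f)
    (hg : Integrable g P) (hfg : Integrable (fun ω => f ω * g ω) P) (hmean : P[g | 𝒢] =ᵐ[P] 0) :
    ∫ ω, f ω * g ω ∂P = 0 := by
  rw [← integral_condExp h𝒢]
  refine integral_eq_zero_of_ae ?_
  filter_upwards [condExp_mul_of_stronglyMeasurable_left hf hfg hg, hmean] with ω hpull hzero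
  exact hpull.trans (by simp [hzero])

lemma integral_mul_le_of_condExp_le (h𝒢 : 𝒢 ≤ m) (hf : StronglyMeasurable[𝒢] f) (hf0 : 0 ≤ f)
    (hg : Integrable g P) (hfg : Integrable (fun ω => f ω * g ω) P)
    (hfs : Integrable (fun ω => f ω * s ω) P) (hgs : P[g | 𝒢] ≤ᵐ[P] s) :
    ∫ ω, f ω * g ω ∂P ≤ ∫ ω, f ω * s ω ∂P := by
  rw [← integral_condExp h𝒢]
  refine integral_mono_ae integrable_condExp hfs ?_
  filter_upwards [condExp_mul_of_stronglyMeasurable_left hf hfg hg, hgs] with ω hpull hle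
  exact hpull.trans_le (mul_le_mul_of_nonneg_left hle (hf0 ω))

lemma integral_le_of_le_mul_quadratic {E h ε σ W : Ω → ℝ} {C₁ C₂ C₃ : ℝ} (h𝒢 : 𝒢 ≤ m)
    (hE : StronglyMeasurable[𝒢] E) (hf : StronglyMeasurable[𝒢] f) (hh : StronglyMeasurable[𝒢] h)
    (hE0 : 0 ≤ E) (hh0 : 0 ≤ h) (hEint : Integrable E P)
    (hε : MemLp ε 2 P) (hσ : AEStronglyMeasurable σ P)
    (hmean : P[ε | 𝒢] =ᵐ[P] 0) (hvar : P[fun ω => ε ω ^ 2 | 𝒢] ≤ᵐ[P] fun ω => σ ω ^ 2)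
    (hfε : ∀ᵐ ω ∂P, |f ω * ε ω| ≤ C₁) (hhε : ∀ᵐ ω ∂P, |h ω * ε ω ^ 2| ≤ C₂)
    (hhσ : ∀ᵐ ω ∂P, |h ω * σ ω ^ 2| ≤ C₃) (hW0 : 0 ≤ W)
    (hW : ∀ᵐ ω ∂P, W ω ≤ E ω * (1 + f ω * ε ω + h ω * ε ω ^ 2)) :
    ∫ ω, W ω ∂P ≤ ∫ ω, E ω * (1 + h ω * σ ω ^ 2) ∂P := by
  have hfm := (hf.mono h𝒢).aestronglyMeasurable (μ := P)
  have hhm := (hh.mono h𝒢).aestronglyMeasurable (μ := P)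
  have hεm := hε.aestronglyMeasurable
  have hlin : Integrable (fun ω => E ω * f ω * ε ω) P := by
    simpa only [mul_assoc, Pi.mul_apply] using hEint.mul_bdd (hfm.mul hεm) hfε
  have hquad : Integrable (fun ω => E ω * h ω * ε ω ^ 2) P := by
    simpa only [mul_assoc, Pi.mul_apply, Pi.pow_apply] using hEint.mul_bdd (hhm.mul (hεm.pow 2)) hhε
  have hscale : Integrable (fun ω => E ω * h ω * σ ω ^ 2) P := by
    simpa only [mul_assoc, Pi.mul_apply, Pi.pow_apply] using hEint.mul_bdd (hhm.mul (hσ.pow 2)) hhσ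
  calc ∫ ω, W ω ∂P
      ≤ ∫ ω, (E ω + E ω * f ω * ε ω + E ω * h ω * ε ω ^ 2) ∂P := by
        refine integral_mono_of_nonneg (.of_forall hW0) ((hEint.add hlin).add hquad) ?_
        filter_upwards [hW] with ω hω
        exact hω.trans_eq (by ring)
    _ = ∫ ω, E ω ∂P + ∫ ω, E ω * f ω * ε ω ∂P + ∫ ω, E ω * h ω * ε ω ^ 2 ∂P := by
        rw [integral_add (by exact hEint.add hlin) hquad, integral_add hEint hlin]
    _ ≤ ∫ ω, E ω ∂P + 0 + ∫ ω, E ω * h ω * σ ω ^ 2 ∂P :=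
        add_le_add
          (add_le_add_right (integral_mul_eq_zero_of_condExp h𝒢 (hE.mul hf)
            (hε.integrable one_le_two) hlin hmean).le _)
          (integral_mul_le_of_condExp_le h𝒢 (hE.mul hh) (mul_nonneg hE0 hh0) hε.integrable_sq
            hquad hscale hvar)
    _ = ∫ ω, E ω * (1 + h ω * σ ω ^ 2) ∂P := by
        rw [add_zero, ← integral_add hEint hscale]
        simp only [mul_add, mul_one, mul_assoc]

end Integral

/-- Martingale-difference noise `ε` whose conditional standard deviation is at most the predictable
scale `σ`, and whose normalization `ε / σ` is bounded by the nondecreasing predictable process `ρ`.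
The noise `ε t` is revealed at time `t + 1`. -/
structure WeightedNoise {Ω : Type*} {m : MeasurableSpace Ω} (P : Measure Ω) (𝓕 : Filtration ℕ m)
    (ε σ ρ : ℕ → Ω → ℝ) : Prop where
  memLp : ∀ t, MemLp (ε t) 2 P
  condExp_eq_zero : ∀ t, P[ε t | 𝓕 t] =ᵐ[P] 0
  condExp_sq_le : ∀ t, P[fun ω => ε t ω ^ 2 | 𝓕 t] ≤ᵐ[P] fun ω => σ t ω ^ 2
  measurable_scale : ∀ t, Measurable[𝓕 t] (σ t)
  scale_pos : ∀ t ω, 0 < σ t ω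
  measurable_bound : ∀ t, Measurable[𝓕 t] (ρ t)
  bound_pos : ∀ t ω, 0 < ρ t ω
  bound_mono : ∀ ω, Monotone fun t => ρ t ω
  abs_div_le : ∀ t, ∀ᵐ ω ∂P, |ε t ω / σ t ω| ≤ ρ t ω

/-- The recursion satisfied by `N t = ‖∑_{i<t} η i • x i‖` in the norm of the inverse regularized
Gram matrix of `x 0, …, x (t - 1)`: here `p t = w / (1 + w)` for the squared norm `w` of `x t`,
and `u t` is the coefficient of the cross term. -/
structure SelfNormalizedRecursion {Ω : Type*} {m : MeasurableSpace Ω} (𝓕 : Filtration ℕ m)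
    (η p u N : ℕ → Ω → ℝ) : Prop where
  measurable_norm : ∀ t, Measurable[𝓕 t] (N t)
  measurable_gain : ∀ t, Measurable[𝓕 t] (p t)
  measurable_cross : ∀ t, Measurable[𝓕 t] (u t)
  norm_zero : ∀ ω, N 0 ω = 0
  norm_nonneg : ∀ t ω, 0 ≤ N t ω
  gain_mem : ∀ t ω, p t ω ∈ Set.Icc 0 1
  cross_sq_le : ∀ t ω, u t ω ^ 2 ≤ p t ω * (1 - p t ω) * N t ω ^ 2
  norm_sq_succ_le : ∀ t ω,
    N (t + 1) ω ^ 2 ≤ N t ω ^ 2 + 2 * u t ω * η t ω + p t ω * η t ω ^ 2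

/-- The threshold for `N (t + 1)` at accumulated gain `∑_{i≤t} p i`; it is known at time `t`. -/
noncomputable def gainThreshold {Ω : Type*} (ℓ : ℝ) (p ρ : ℕ → Ω → ℝ) (t : ℕ) (ω : Ω) : ℝ :=
  threshold ℓ (∑ i ∈ range (t + 1), p i ω) (ρ t ω)

/-- The exponent `ℓ / b` at which the exponential moment of `N (t + 1)` is taken, `b` being the
threshold of time `t`. -/
noncomputable def tilt {Ω : Type*} (ℓ : ℝ) (p ρ : ℕ → Ω → ℝ) (t : ℕ) (ω : Ω) : ℝ :=
  ℓ / gainThreshold ℓ p ρ t ω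

/-- `N t` raised to the threshold of time `t`: linearizing the square root in the recursion at this
point keeps the increments bounded when `N t` is small. -/
noncomputable def clippedNorm {Ω : Type*} (ℓ : ℝ) (p ρ N : ℕ → Ω → ℝ) (t : ℕ) (ω : Ω) : ℝ :=
  max (N t ω) (gainThreshold ℓ p ρ t ω)

section Moment

variable {Ω : Type*} {m : MeasurableSpace Ω} {P : Measure Ω} {𝓕 : Filtration ℕ m}
  {ε σ ρ η p u N : ℕ → Ω → ℝ} {ℓ : ℝ}

lemma WeightedNoise.gainThreshold_pos (hε : WeightedNoise P 𝓕 ε σ ρ) (hℓ : 0 < ℓ) (t : ℕ)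
    (ω : Ω) : 0 < gainThreshold ℓ p ρ t ω :=
  threshold_pos hℓ (hε.bound_pos t ω)

lemma WeightedNoise.tilt_pos (hε : WeightedNoise P 𝓕 ε σ ρ) (hℓ : 0 < ℓ) (t : ℕ) (ω : Ω) :
    0 < tilt ℓ p ρ t ω :=
  div_pos hℓ (hε.gainThreshold_pos hℓ t ω)

lemma WeightedNoise.tilt_mul_clippedNorm (hε : WeightedNoise P 𝓕 ε σ ρ) (hℓ : 0 < ℓ) (t : ℕ)
    (ω : Ω) : tilt ℓ p ρ t ω * clippedNorm ℓ p ρ N t ω = max (tilt ℓ p ρ t ω * N t ω) ℓ := by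
  rw [clippedNorm, mul_max_of_nonneg _ _ (hε.tilt_pos hℓ t ω).le, tilt,
    div_mul_cancel₀ _ (hε.gainThreshold_pos hℓ t ω).ne']

lemma WeightedNoise.ae_abs_tilt_mul_le (hε : WeightedNoise P 𝓕 ε σ ρ) (hℓ : 0 < ℓ) (t : ℕ) :
    ∀ᵐ ω ∂P, |tilt ℓ p ρ t ω * (ε t ω / σ t ω)| ≤ 1 := by
  filter_upwards [hε.abs_div_le t] with ω hω
  rw [abs_mul, abs_of_pos (hε.tilt_pos hℓ t ω), tilt, div_mul_eq_mul_div,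
    div_le_one (hε.gainThreshold_pos hℓ t ω)]
  calc ℓ * |ε t ω / σ t ω| ≤ ℓ * ρ t ω := by gcongr
    _ = ρ t ω * ℓ := mul_comm _ _
    _ ≤ gainThreshold ℓ p ρ t ω := mul_le_threshold

namespace SelfNormalizedRecursion

lemma sum_gain_nonneg (hN : SelfNormalizedRecursion 𝓕 η p u N) (t : ℕ) (ω : Ω) :
    0 ≤ ∑ i ∈ range t, p i ω :=
  sum_nonneg fun i _ => (hN.gain_mem i ω).1

lemma gain_le_sum (hN : SelfNormalizedRecursion 𝓕 η p u N) (t : ℕ) (ω : Ω) :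
    p t ω ≤ ∑ i ∈ range (t + 1), p i ω := by
  rw [sum_range_succ]
  exact le_add_of_nonneg_left (hN.sum_gain_nonneg t ω)

lemma measurable_gainThreshold (hN : SelfNormalizedRecursion 𝓕 η p u N)
    (hε : WeightedNoise P 𝓕 ε σ ρ) (ℓ : ℝ) (t : ℕ) :
    Measurable[𝓕 t] (gainThreshold ℓ p ρ t) := by
  have hsum : Measurable[𝓕 t] fun ω => ∑ i ∈ range (t + 1), p i ω :=
    Finset.measurable_fun_sum _ fun i hi =>
      (hN.measurable_gain i).mono (𝓕.mono (Nat.lt_succ_iff.mp (mem_range.mp hi))) le_rfl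
  exact ((hsum.mul_const ℓ).sqrt.const_mul 2).add ((hε.measurable_bound t).mul_const ℓ)

lemma gainThreshold_le_succ (hN : SelfNormalizedRecursion 𝓕 η p u N)
    (hε : WeightedNoise P 𝓕 ε σ ρ) (hℓ : 0 ≤ ℓ) (t : ℕ) (ω : Ω) :
    gainThreshold ℓ p ρ t ω ≤ gainThreshold ℓ p ρ (t + 1) ω := by
  refine threshold_mono hℓ ?_ (hε.bound_mono ω t.le_succ)
  rw [sum_range_succ _ (t + 1)]
  exact le_add_of_nonneg_right (hN.gain_mem (t + 1) ω).1

lemma measurable_tilt (hN : SelfNormalizedRecursion 𝓕 η p u N) (hε : WeightedNoise P 𝓕 ε σ ρ)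
    (ℓ : ℝ) (t : ℕ) : Measurable[𝓕 t] (tilt ℓ p ρ t) :=
  (hN.measurable_gainThreshold hε ℓ t).const_div ℓ

lemma measurable_clippedNorm (hN : SelfNormalizedRecursion 𝓕 η p u N)
    (hε : WeightedNoise P 𝓕 ε σ ρ) (ℓ : ℝ) (t : ℕ) :
    Measurable[𝓕 t] (clippedNorm ℓ p ρ N t) :=
  (hN.measurable_norm t).max (hN.measurable_gainThreshold hε ℓ t)

lemma tilt_succ_mul_le (hN : SelfNormalizedRecursion 𝓕 η p u N) (hε : WeightedNoise P 𝓕 ε σ ρ)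
    (hℓ : 0 < ℓ) (t : ℕ) (ω : Ω) :
    tilt ℓ p ρ (t + 1) ω * N (t + 1) ω ≤ tilt ℓ p ρ t ω * N (t + 1) ω :=
  mul_le_mul_of_nonneg_right
    (div_le_div_of_nonneg_left hℓ.le (hε.gainThreshold_pos hℓ t ω)
      (hN.gainThreshold_le_succ hε hℓ.le t ω)) (hN.norm_nonneg (t + 1) ω)

lemma two_mul_tilt_sq_mul_le (hN : SelfNormalizedRecursion 𝓕 η p u N)
    (hε : WeightedNoise P 𝓕 ε σ ρ) (hℓ : 0 < ℓ) (t : ℕ) (ω : Ω) :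
    2 * tilt ℓ p ρ t ω ^ 2 * p t ω ≤ ℓ / 2 :=
  two_mul_div_threshold_sq_mul_le hℓ (hN.gain_mem t ω).1 (hN.gain_le_sum t ω) (hε.bound_pos t ω)

lemma abs_cross_div_clippedNorm_le (hN : SelfNormalizedRecursion 𝓕 η p u N)
    (hε : WeightedNoise P 𝓕 ε σ ρ) (hℓ : 0 < ℓ) (t : ℕ) (ω : Ω) :
    |u t ω / clippedNorm ℓ p ρ N t ω| ≤ 1 := by
  obtain ⟨hp0, hp1⟩ := hN.gain_mem t ω
  have hX : 0 < clippedNorm ℓ p ρ N t ω := lt_max_of_lt_right (hε.gainThreshold_pos hℓ t ω)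
  rw [← sq_le_one_iff_abs_le_one]
  exact (sq_div_le_of_sq_le hX (hN.norm_nonneg t ω) (le_max_left _ _) ⟨hp0, hp1⟩
    (hN.cross_sq_le t ω)).trans (mul_le_one₀ hp1 (by linarith) (by linarith))

end SelfNormalizedRecursion

variable (hε : WeightedNoise P 𝓕 ε σ ρ)
  (hN : SelfNormalizedRecursion 𝓕 (fun t ω => ε t ω / σ t ω) p u N)
include hε hN

lemma ae_tilt_mul_norm_succ_le (hℓ : 1 ≤ ℓ) (t : ℕ) : ∀ᵐ ω ∂P,
    tilt ℓ p ρ t ω * N (t + 1) ω ≤ tilt ℓ p ρ t ω * clippedNorm ℓ p ρ N t ω + 1 := by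
  have hℓ0 : 0 < ℓ := one_pos.trans_le hℓ
  filter_upwards [hε.ae_abs_tilt_mul_le hℓ0 t] with ω hη
  exact mul_le_add_one_of_recursion (lt_max_of_lt_right (hε.gainThreshold_pos hℓ0 t ω))
    (hN.norm_nonneg t ω) (le_max_left _ _) (hε.tilt_pos hℓ0 t ω).le
    (hℓ.trans (by rw [hε.tilt_mul_clippedNorm hℓ0]; exact le_max_right _ _)) (hN.gain_mem t ω) hη
    (hN.cross_sq_le t ω) (hN.norm_sq_succ_le t ω)

lemma ae_exp_tilt_mul_norm_succ_le (hℓ : 1 ≤ ℓ) (t : ℕ) : ∀ᵐ ω ∂P,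
    Real.exp (tilt ℓ p ρ t ω * N (t + 1) ω) ≤
      Real.exp (tilt ℓ p ρ t ω * clippedNorm ℓ p ρ N t ω) *
        (1 + u t ω / clippedNorm ℓ p ρ N t ω * (tilt ℓ p ρ t ω * (ε t ω / σ t ω)) +
          2 * p t ω * (tilt ℓ p ρ t ω * (ε t ω / σ t ω)) ^ 2) := by
  have hℓ0 : 0 < ℓ := one_pos.trans_le hℓ
  filter_upwards [hε.ae_abs_tilt_mul_le hℓ0 t] with ω hη
  exact exp_mul_le_of_recursion (lt_max_of_lt_right (hε.gainThreshold_pos hℓ0 t ω))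
    (hN.norm_nonneg t ω) (le_max_left _ _) (hε.tilt_pos hℓ0 t ω).le
    (hℓ.trans (by rw [hε.tilt_mul_clippedNorm hℓ0]; exact le_max_right _ _)) (hN.gain_mem t ω) hη
    (hN.cross_sq_le t ω) (hN.norm_sq_succ_le t ω)

lemma ae_tilt_mul_clippedNorm_le (hℓ : 1 ≤ ℓ) (t : ℕ) :
    ∀ᵐ ω ∂P, tilt ℓ p ρ t ω * clippedNorm ℓ p ρ N t ω ≤ ℓ + t := by
  have hℓ0 : 0 < ℓ := one_pos.trans_le hℓ
  induction t with
  | zero =>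
    refine .of_forall fun ω => ?_
    simp [hε.tilt_mul_clippedNorm hℓ0, hN.norm_zero, hℓ0.le]
  | succ t ih =>
    filter_upwards [ih, ae_tilt_mul_norm_succ_le hε hN hℓ t] with ω hX hstep
    rw [hε.tilt_mul_clippedNorm hℓ0, max_le_iff]
    push_cast
    exact ⟨by linarith [hN.tilt_succ_mul_le hε hℓ0 t ω], by linarith [t.cast_nonneg (α := ℝ)]⟩

lemma integrable_exp_tilt_mul_clippedNorm [IsFiniteMeasure P] (hℓ : 1 ≤ ℓ) (t : ℕ) :
    Integrable (fun ω => Real.exp (tilt ℓ p ρ t ω * clippedNorm ℓ p ρ N t ω)) P := by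
  have hmeas := ((hN.measurable_tilt hε ℓ t).mul (hN.measurable_clippedNorm hε ℓ t)).exp
  refine .of_bound (hmeas.mono (𝓕.le t) le_rfl).aestronglyMeasurable (Real.exp (ℓ + t)) ?_
  filter_upwards [ae_tilt_mul_clippedNorm_le hε hN hℓ t] with ω hω
  rw [Real.norm_eq_abs, Real.abs_exp]
  exact Real.exp_le_exp.mpr hω

lemma integrable_exp_tilt_mul_norm_succ [IsFiniteMeasure P] (hℓ : 1 ≤ ℓ) (t : ℕ) :
    Integrable (fun ω => Real.exp (tilt ℓ p ρ t ω * N (t + 1) ω)) P := by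
  have hmeas := (((hN.measurable_tilt hε ℓ t).mono (𝓕.mono t.le_succ) le_rfl).mul
    (hN.measurable_norm (t + 1))).exp
  refine .of_bound (hmeas.mono (𝓕.le _) le_rfl).aestronglyMeasurable
    (Real.exp (ℓ + t + 1)) ?_
  filter_upwards [ae_tilt_mul_clippedNorm_le hε hN hℓ t,
    ae_tilt_mul_norm_succ_le hε hN hℓ t] with ω hX hstep
  rw [Real.norm_eq_abs, Real.abs_exp]
  exact Real.exp_le_exp.mpr (by linarith)

lemma integral_exp_tilt_mul_norm_succ_le [IsFiniteMeasure P] (hℓ : 1 ≤ ℓ) (t : ℕ) :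
    ∫ ω, Real.exp (tilt ℓ p ρ t ω * N (t + 1) ω) ∂P ≤
      ∫ ω, Real.exp (tilt ℓ p ρ t ω * clippedNorm ℓ p ρ N t ω) *
        (1 + 2 * tilt ℓ p ρ t ω ^ 2 * p t ω) ∂P := by
  have hℓ0 : 0 < ℓ := one_pos.trans_le hℓ
  have hθ := hN.measurable_tilt hε ℓ t
  have hX := hN.measurable_clippedNorm hε ℓ t
  have hσ := hε.measurable_scale t
  have hσ_cancel (ω : Ω) : 2 * p t ω * (tilt ℓ p ρ t ω / σ t ω) ^ 2 * σ t ω ^ 2 =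
      2 * tilt ℓ p ρ t ω ^ 2 * p t ω := by
    have := (hε.scale_pos t ω).ne'
    field_simp
  have key := integral_le_of_le_mul_quadratic (P := P) (𝓕.le t)
    (E := fun ω => Real.exp (tilt ℓ p ρ t ω * clippedNorm ℓ p ρ N t ω))
    (f := fun ω => u t ω / clippedNorm ℓ p ρ N t ω * (tilt ℓ p ρ t ω / σ t ω))
    (h := fun ω => 2 * p t ω * (tilt ℓ p ρ t ω / σ t ω) ^ 2) (C₁ := 1) (C₂ := 2) (C₃ := ℓ / 2)
    (hθ.mul hX).exp.stronglyMeasurable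
    (((hN.measurable_cross t).div hX).mul (hθ.div hσ)).stronglyMeasurable
    (((hN.measurable_gain t).const_mul 2).mul ((hθ.div hσ).pow_const 2)).stronglyMeasurable
    (fun ω => Real.exp_nonneg _)
    (fun ω => mul_nonneg (mul_nonneg zero_le_two (hN.gain_mem t ω).1) (sq_nonneg _))
    (integrable_exp_tilt_mul_clippedNorm hε hN hℓ t) (hε.memLp t)
    (hσ.mono (𝓕.le t) le_rfl).aestronglyMeasurable (hε.condExp_eq_zero t) (hε.condExp_sq_le t)
    ?_ ?_ (.of_forall fun ω => ?_) (fun ω => Real.exp_nonneg (tilt ℓ p ρ t ω * N (t + 1) ω)) ?_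
  · simpa only [hσ_cancel] using key
  · filter_upwards [hε.ae_abs_tilt_mul_le (p := p) hℓ0 t] with ω hη
    rw [mul_assoc, div_mul_eq_mul_div (tilt ℓ p ρ t ω), mul_div_assoc (tilt ℓ p ρ t ω), abs_mul]
    exact mul_le_one₀ (hN.abs_cross_div_clippedNorm_le hε hℓ0 t ω) (abs_nonneg _) hη
  · filter_upwards [hε.ae_abs_tilt_mul_le (p := p) hℓ0 t] with ω hη
    obtain ⟨hp0, hp1⟩ := hN.gain_mem t ω
    rw [mul_assoc, ← mul_pow, div_mul_eq_mul_div, mul_div_assoc, mul_assoc,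
      abs_of_nonneg (mul_nonneg zero_le_two (mul_nonneg hp0 (sq_nonneg _)))]
    linarith [mul_le_one₀ hp1 (sq_nonneg _) ((sq_le_one_iff_abs_le_one _).mpr hη)]
  · rw [hσ_cancel, abs_of_nonneg (mul_nonneg (by positivity) (hN.gain_mem t ω).1)]
    exact hN.two_mul_tilt_sq_mul_le hε hℓ0 t ω
  · filter_upwards [ae_exp_tilt_mul_norm_succ_le hε hN hℓ t] with ω hω
    exact hω.trans_eq (by ring)

lemma integral_exp_tilt_mul_norm_le [IsProbabilityMeasure P] (hℓ : 1 ≤ ℓ) (t : ℕ) :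
    ∫ ω, Real.exp (tilt ℓ p ρ t ω * N (t + 1) ω) ∂P ≤ (t + 1) * Real.exp (3 / 2 * ℓ) := by
  have hℓ0 : 0 < ℓ := one_pos.trans_le hℓ
  induction t with
  | zero =>
    refine (integral_exp_tilt_mul_norm_succ_le hε hN hℓ 0).trans ?_
    refine (integral_mono_of_nonneg (.of_forall fun ω => ?_) (integrable_const _)
      (.of_forall fun ω => exp_max_mul_le_of_le hℓ0 (hN.gain_mem 0 ω).1 (hN.gain_le_sum 0 ω)
        (hε.bound_pos 0 ω) ?_)).trans_eq (by simp)
    · have := (hN.gain_mem 0 ω).1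
      positivity
    · rw [hN.norm_zero]
      exact (hε.gainThreshold_pos hℓ0 0 ω).le
  | succ t ih =>
    have hexp_int := integrable_exp_tilt_mul_norm_succ hε hN hℓ t
    calc _ ≤ _ := integral_exp_tilt_mul_norm_succ_le hε hN hℓ (t + 1)
      _ ≤ ∫ ω, (Real.exp (tilt ℓ p ρ t ω * N (t + 1) ω) + Real.exp (3 / 2 * ℓ)) ∂P := by
        refine integral_mono_of_nonneg (.of_forall fun ω => ?_)
          (hexp_int.add (integrable_const _)) (.of_forall fun ω => ?_)
        · have := (hN.gain_mem (t + 1) ω).1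
          positivity
        · simp only [tilt, clippedNorm, gainThreshold, sum_range_succ _ (t + 1)]
          exact exp_max_mul_le hℓ0 (hN.sum_gain_nonneg (t + 1) ω) (hN.gain_mem (t + 1) ω).1
            (hε.bound_pos t ω) (hε.bound_mono ω t.le_succ)
      _ = ∫ ω, Real.exp (tilt ℓ p ρ t ω * N (t + 1) ω) ∂P + Real.exp (3 / 2 * ℓ) := by
        rw [integral_add hexp_int (integrable_const _)]
        simp
      _ ≤ _ := by push_cast; linarith

theorem measure_four_mul_gainThreshold_lt_le [IsProbabilityMeasure P] (hℓ : 1 ≤ ℓ) (t : ℕ) :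
    P {ω | 4 * gainThreshold ℓ p ρ t ω < N (t + 1) ω} ≤
      ENNReal.ofReal ((t + 1) * Real.exp (-(5 / 2) * ℓ)) := by
  have hℓ0 : 0 < ℓ := one_pos.trans_le hℓ
  set S : Set Ω := {ω | Real.exp (4 * ℓ) ≤ Real.exp (tilt ℓ p ρ t ω * N (t + 1) ω)}
  have hsub : {ω | 4 * gainThreshold ℓ p ρ t ω < N (t + 1) ω} ⊆ S := fun ω hω => by
    refine Real.exp_le_exp.mpr ?_
    rw [tilt, div_mul_eq_mul_div, le_div_iff₀ (hε.gainThreshold_pos hℓ0 t ω), mul_right_comm,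
      mul_comm ℓ]
    exact mul_le_mul_of_nonneg_right (le_of_lt hω) hℓ0.le
  have hmarkov : Real.exp (4 * ℓ) * P.real S ≤ (t + 1) * Real.exp (3 / 2 * ℓ) :=
    (mul_meas_ge_le_integral_of_nonneg (.of_forall fun ω => Real.exp_nonneg _)
      (integrable_exp_tilt_mul_norm_succ hε hN hℓ t) _).trans
      (integral_exp_tilt_mul_norm_le hε hN hℓ t)
  have hsplit : (t + 1) * Real.exp (3 / 2 * ℓ) =
      Real.exp (4 * ℓ) * ((t + 1) * Real.exp (-(5 / 2) * ℓ)) := by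
    rw [mul_left_comm, ← Real.exp_add]
    ring_nf
  rw [hsplit] at hmarkov
  calc _ ≤ P S := measure_mono hsub
    _ = ENNReal.ofReal (P.real S) := (ofReal_measureReal).symm
    _ ≤ _ := ENNReal.ofReal_le_ofReal (le_of_mul_le_mul_left hmarkov (Real.exp_pos _))

end Moment

/-! ### Norms of positive semidefinite matrices -/

section MatNorm

variable {d : ℕ} {M Z : Matrix (Fin d) (Fin d) ℝ}

lemma matNorm_nonneg (M : Matrix (Fin d) (Fin d) ℝ) (x : Fin d → ℝ) : 0 ≤ matNorm M x :=
  Real.sqrt_nonneg _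

lemma matNorm_sq (hM : M.PosSemidef) (x : Fin d → ℝ) : matNorm M x ^ 2 = x ⬝ᵥ (M *ᵥ x) :=
  Real.sq_sqrt (hM.dotProduct_mulVec_nonneg x)

lemma matNorm_eq_norm (hM : M.PosSemidef) (x : Fin d → ℝ) :
    matNorm M x = @norm _ (M.toSeminormedAddCommGroup hM).toNorm x :=
  congrArg Real.sqrt (dotProduct_comm _ _)

lemma matNorm_sub_le (hM : M.PosSemidef) (x y : Fin d → ℝ) :
    matNorm M (x - y) ≤ matNorm M x + matNorm M y := by
  simpa only [matNorm_eq_norm hM] using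
    @norm_sub_le _ (M.toSeminormedAddCommGroup hM).toSeminormedAddGroup x y

lemma matNorm_smul (M : Matrix (Fin d) (Fin d) ℝ) (c : ℝ) (x : Fin d → ℝ) :
    matNorm M (c • x) = |c| * matNorm M x := by
  rw [matNorm, mulVec_smul, dotProduct_smul, smul_dotProduct, smul_smul, smul_eq_mul, ← sq,
    Real.sqrt_mul (sq_nonneg c), Real.sqrt_sq_eq_abs, matNorm]

lemma abs_dotProduct_mulVec_le (hM : M.PosSemidef) (x y : Fin d → ℝ) :
    |x ⬝ᵥ (M *ᵥ y)| ≤ matNorm M x * matNorm M y := by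
  let _ := M.toSeminormedAddCommGroup hM
  let _ := M.toInnerProductSpace hM
  rw [matNorm_eq_norm hM, matNorm_eq_norm hM, dotProduct_comm]
  exact abs_real_inner_le_norm x y

lemma dotProduct_mulVec_comm {n : Type*} [Fintype n] {M : Matrix n n ℝ} (hM : M.IsHermitian)
    (x y : n → ℝ) : x ⬝ᵥ (M *ᵥ y) = y ⬝ᵥ (M *ᵥ x) := by
  rw [← dotProduct_transpose_mulVec, ← conjTranspose_eq_transpose_of_trivial, hM.eq]

lemma mulVec_inv_mulVec {n K : Type*} [Fintype n] [DecidableEq n] [CommRing K] {Z : Matrix n n K}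
    (hZ : IsUnit Z) (x : n → K) : Z *ᵥ (Z⁻¹ *ᵥ x) = x := by
  rw [mulVec_mulVec, mul_nonsing_inv _ ((isUnit_iff_isUnit_det _).mp hZ), one_mulVec]

lemma inv_mulVec_mulVec {n K : Type*} [Fintype n] [DecidableEq n] [CommRing K] {Z : Matrix n n K}
    (hZ : IsUnit Z) (x : n → K) : Z⁻¹ *ᵥ (Z *ᵥ x) = x := by
  rw [mulVec_mulVec, nonsing_inv_mul _ ((isUnit_iff_isUnit_det _).mp hZ), one_mulVec]

lemma matNorm_inv_mulVec (hZ : Z.PosDef) (x : Fin d → ℝ) :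
    matNorm Z (Z⁻¹ *ᵥ x) = matNorm Z⁻¹ x := by
  rw [matNorm, mulVec_inv_mulVec hZ.isUnit, dotProduct_comm, matNorm]

lemma dotProduct_le_matNorm_inv_mul (hZ : Z.PosDef) (x y : Fin d → ℝ) :
    x ⬝ᵥ y ≤ matNorm Z⁻¹ x * matNorm Z y := by
  have h := abs_dotProduct_mulVec_le hZ.posSemidef (Z⁻¹ *ᵥ x) y
  rw [matNorm_inv_mulVec hZ, dotProduct_mulVec_comm hZ.isHermitian, mulVec_inv_mulVec hZ.isUnit,
    dotProduct_comm] at h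
  exact (le_abs_self _).trans h

lemma sqrt_mul_matNorm_inv_le {lam : ℝ} (hZ : Z.PosDef) (hlam : 0 ≤ lam)
    (hle : ∀ y, lam * (y ⬝ᵥ y) ≤ y ⬝ᵥ (Z *ᵥ y)) (x : Fin d → ℝ) :
    √lam * matNorm Z⁻¹ x ≤ √(x ⬝ᵥ x) := by
  have hsqrt (v : Fin d → ℝ) : matNorm 1 v = √(v ⬝ᵥ v) := by rw [matNorm, one_mulVec]
  have hlower (v : Fin d → ℝ) : √lam * matNorm 1 v ≤ matNorm Z v := by
    rw [hsqrt, ← Real.sqrt_mul hlam, matNorm]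
    exact Real.sqrt_le_sqrt (hle v)
  have hcs : matNorm Z⁻¹ x ^ 2 ≤ matNorm 1 x * matNorm 1 (Z⁻¹ *ᵥ x) := by
    rw [matNorm_sq hZ.inv.posSemidef]
    simpa only [one_mulVec] using
      (le_abs_self _).trans (abs_dotProduct_mulVec_le PosSemidef.one x (Z⁻¹ *ᵥ x))
  rcases (matNorm_nonneg Z⁻¹ x).eq_or_lt with hzero | hpos
  · rw [← hzero, mul_zero]
    exact Real.sqrt_nonneg _
  · refine le_of_mul_le_mul_right ?_ hpos
    calc √lam * matNorm Z⁻¹ x * matNorm Z⁻¹ x = √lam * matNorm Z⁻¹ x ^ 2 := by ring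
      _ ≤ √lam * (matNorm 1 x * matNorm 1 (Z⁻¹ *ᵥ x)) := by gcongr
      _ = matNorm 1 x * (√lam * matNorm 1 (Z⁻¹ *ᵥ x)) := by ring
      _ ≤ matNorm 1 x * matNorm Z⁻¹ x := by
        gcongr
        · exact matNorm_nonneg _ _
        · exact (hlower _).trans_eq (matNorm_inv_mulVec hZ x)
      _ = √(x ⬝ᵥ x) * matNorm Z⁻¹ x := by rw [hsqrt]

end MatNorm

section RankOne

variable {n : Type*} [Fintype n] [DecidableEq n] {Z : Matrix n n ℝ}

lemma inv_add_vecMulVec_mulVec (hZ : Z.PosDef) (x S : n → ℝ) (η : ℝ) :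
    (Z + vecMulVec x x)⁻¹ *ᵥ (S + η • x) =
      Z⁻¹ *ᵥ S + ((η - x ⬝ᵥ (Z⁻¹ *ᵥ S)) / (1 + x ⬝ᵥ (Z⁻¹ *ᵥ x))) • (Z⁻¹ *ᵥ x) := by
  set κ := (η - x ⬝ᵥ (Z⁻¹ *ᵥ S)) / (1 + x ⬝ᵥ (Z⁻¹ *ᵥ x)) with hκ
  have hw : 0 ≤ x ⬝ᵥ (Z⁻¹ *ᵥ x) := hZ.inv.posSemidef.dotProduct_mulVec_nonneg x
  have hη : η = x ⬝ᵥ (Z⁻¹ *ᵥ S) + κ * (1 + x ⬝ᵥ (Z⁻¹ *ᵥ x)) := by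
    rw [hκ, div_mul_cancel₀ _ (by positivity), add_sub_cancel]
  have hpos : (Z + vecMulVec x x).PosDef :=
    hZ.add_posSemidef (by simpa using posSemidef_vecMulVec_self_star x)
  have himage : S + η • x = (Z + vecMulVec x x) *ᵥ (Z⁻¹ *ᵥ S + κ • (Z⁻¹ *ᵥ x)) := by
    rw [add_mulVec, mulVec_add, mulVec_smul, mulVec_inv_mulVec hZ.isUnit,
      mulVec_inv_mulVec hZ.isUnit, vecMulVec_mulVec, op_smul_eq_smul, dotProduct_add,
      dotProduct_smul, smul_eq_mul, add_assoc, ← add_smul]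
    congr 2
    rw [hη]
    ring
  rw [himage, inv_mulVec_mulVec hpos.isUnit]

lemma dotProduct_inv_add_vecMulVec_mulVec (hZ : Z.PosDef) (x S : n → ℝ) (η : ℝ) :
    (S + η • x) ⬝ᵥ ((Z + vecMulVec x x)⁻¹ *ᵥ (S + η • x)) =
      S ⬝ᵥ (Z⁻¹ *ᵥ S) + 2 * (x ⬝ᵥ (Z⁻¹ *ᵥ S) / (1 + x ⬝ᵥ (Z⁻¹ *ᵥ x))) * η +
        x ⬝ᵥ (Z⁻¹ *ᵥ x) / (1 + x ⬝ᵥ (Z⁻¹ *ᵥ x)) * η ^ 2 -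
        (x ⬝ᵥ (Z⁻¹ *ᵥ S)) ^ 2 / (1 + x ⬝ᵥ (Z⁻¹ *ᵥ x)) := by
  have hw : 0 ≤ x ⬝ᵥ (Z⁻¹ *ᵥ x) := hZ.inv.posSemidef.dotProduct_mulVec_nonneg x
  rw [inv_add_vecMulVec_mulVec hZ]
  simp only [dotProduct_add, add_dotProduct, dotProduct_smul, smul_dotProduct, smul_eq_mul,
    dotProduct_mulVec_comm hZ.inv.isHermitian S x]
  field_simp
  ring

lemma det_add_vecMulVec (hZ : IsUnit Z) (x : n → ℝ) :
    (Z + vecMulVec x x).det = Z.det * (1 + x ⬝ᵥ (Z⁻¹ *ᵥ x)) := by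
  rw [vecMulVec_eq Unit,
    det_add_replicateCol_mul_replicateRow ((isUnit_iff_isUnit_det _).mp hZ),
    det_unique (n := Unit), Matrix.mul_assoc, ← replicateCol_mulVec, Matrix.add_apply,
    one_apply_eq, replicateRow_mul_replicateCol_apply]

lemma log_det_le_card_mul_log_trace_div [Nonempty n] (hZ : Z.PosDef) :
    Real.log Z.det ≤ Fintype.card n * Real.log (Z.trace / Fintype.card n) := by
  have hdet : Z.det = ∏ i, hZ.isHermitian.eigenvalues i := by
    simpa using hZ.isHermitian.det_eq_prod_eigenvalues
  have htrace : Z.trace = ∑ i, hZ.isHermitian.eigenvalues i := by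
    simpa using hZ.isHermitian.trace_eq_sum_eigenvalues
  have hcard : (0 : ℝ) < Fintype.card n := by exact_mod_cast Fintype.card_pos
  have hjensen := strictConcaveOn_log_Ioi.concaveOn.le_map_sum (t := univ)
    (w := fun _ : n => (Fintype.card n : ℝ)⁻¹) (p := hZ.isHermitian.eigenvalues)
    (fun _ _ => by positivity) (by simp [hcard.ne']) (fun i _ => hZ.eigenvalues_pos i)
  simp only [smul_eq_mul, ← mul_sum] at hjensen
  rw [hdet, htrace, Real.log_prod fun i _ => (hZ.eigenvalues_pos i).ne', div_eq_inv_mul]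
  exact (inv_mul_le_iff₀ hcard).mp hjensen

end RankOne

/-! ### Weighted ridge regression along a trajectory -/

section Smallest

variable {σ : ℕ → ℝ} {t : ℕ}

lemma sbMin_eq_inf' (σ : ℕ → ℝ) (ht : 1 ≤ t) :
    sbMin σ t = (Icc 1 t).inf' (nonempty_Icc.mpr ht) σ := by
  rw [inf'_eq_csInf_image, coe_Icc, sbMin]

lemma sbMin_le {i : ℕ} (hi : i ∈ Icc 1 t) : sbMin σ t ≤ σ i := by
  rw [sbMin_eq_inf' σ ((mem_Icc.mp hi).1.trans (mem_Icc.mp hi).2)]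
  exact inf'_le σ hi

lemma sbMin_pos (hσ : ∀ i, 1 ≤ i → 0 < σ i) (ht : 1 ≤ t) : 0 < sbMin σ t := by
  rw [sbMin_eq_inf' σ ht, lt_inf'_iff]
  exact fun i hi => hσ i (mem_Icc.mp hi).1

lemma sbMin_anti {s : ℕ} (hs : 1 ≤ s) (hst : s ≤ t) : sbMin σ t ≤ sbMin σ s := by
  rw [sbMin_eq_inf' σ hs, sbMin_eq_inf' σ (hs.trans hst)]
  exact inf'_mono σ (Icc_subset_Icc_right hst) _

end Smallest

lemma sum_Icc_one_eq_sum_range (f : ℕ → ℝ) (T : ℕ) :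
    ∑ t ∈ Icc 1 T, f t = ∑ t ∈ range T, f (t + 1) := by
  rw [range_eq_Ico, sum_Ico_add' f 0 T 1]
  rfl

section Trajectory

variable {d : ℕ}

/-- The action of round `t` divided by its weight. -/
noncomputable def scaledAction (a : ℕ → Fin d → ℝ) (σ : ℕ → ℝ) (t : ℕ) : Fin d → ℝ :=
  (σ t)⁻¹ • a t

/-- The self-normalized sum `∑_{i=1}^t σ̄_i^{-2} ε_i a_i` of the noise. -/
noncomputable def noiseSum (a : ℕ → Fin d → ℝ) (σ ε : ℕ → ℝ) (t : ℕ) : Fin d → ℝ :=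
  ∑ i ∈ Icc 1 t, (ε i / σ i) • scaledAction a σ i

/-- The norm of `noiseSum` relative to the inverse Gram matrix. -/
noncomputable def noiseNorm (lam : ℝ) (a : ℕ → Fin d → ℝ) (σ ε : ℕ → ℝ) (t : ℕ) : ℝ :=
  matNorm (wGram lam a σ t)⁻¹ (noiseSum a σ ε t)

/-- The leverage `xᵀ A_t⁻¹ x` of the next scaled action `x`, that of round `t + 1`. -/
noncomputable def leverage (lam : ℝ) (a : ℕ → Fin d → ℝ) (σ : ℕ → ℝ) (t : ℕ) : ℝ :=
  scaledAction a σ (t + 1) ⬝ᵥ ((wGram lam a σ t)⁻¹ *ᵥ scaledAction a σ (t + 1))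

/-- The coefficient `w / (1 + w)`, for the leverage `w`, with which the squared noise of round
`t + 1` enters `noiseNorm`. -/
noncomputable def gain (lam : ℝ) (a : ℕ → Fin d → ℝ) (σ : ℕ → ℝ) (t : ℕ) : ℝ :=
  leverage lam a σ t / (1 + leverage lam a σ t)

/-- Half the coefficient with which the noise of round `t + 1` enters `noiseNorm` linearly. -/
noncomputable def crossCoeff (lam : ℝ) (a : ℕ → Fin d → ℝ) (σ ε : ℕ → ℝ) (t : ℕ) : ℝ :=
  scaledAction a σ (t + 1) ⬝ᵥ ((wGram lam a σ t)⁻¹ *ᵥ noiseSum a σ ε t) /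
    (1 + leverage lam a σ t)

variable {lam : ℝ} {a : ℕ → Fin d → ℝ} {σ ε : ℕ → ℝ}

lemma wGram_zero (lam : ℝ) (a : ℕ → Fin d → ℝ) (σ : ℕ → ℝ) : wGram lam a σ 0 = lam • 1 := by
  simp [wGram]

lemma wGram_succ (lam : ℝ) (a : ℕ → Fin d → ℝ) (σ : ℕ → ℝ) (t : ℕ) :
    wGram lam a σ (t + 1) = wGram lam a σ t +
      vecMulVec (scaledAction a σ (t + 1)) (scaledAction a σ (t + 1)) := by
  rw [wGram, sum_Icc_succ_top (Nat.le_add_left 1 t), ← add_assoc, ← wGram, scaledAction,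
    smul_vecMulVec, vecMulVec_smul, smul_smul, ← mul_inv, ← sq]

lemma posSemidef_wGram_sub (lam : ℝ) (a : ℕ → Fin d → ℝ) (σ : ℕ → ℝ) (t : ℕ) :
    (wGram lam a σ t - lam • 1).PosSemidef := by
  rw [wGram, add_sub_cancel_left]
  refine posSemidef_sum _ fun i _ => PosSemidef.smul ?_ (inv_nonneg.mpr (sq_nonneg _))
  simpa using posSemidef_vecMulVec_self_star (a i)

lemma posDef_wGram (hlam : 0 < lam) (a : ℕ → Fin d → ℝ) (σ : ℕ → ℝ) (t : ℕ) :
    (wGram lam a σ t).PosDef := by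
  rw [← add_sub_cancel (lam • 1) (wGram lam a σ t)]
  exact (PosDef.one.smul hlam).add_posSemidef (posSemidef_wGram_sub lam a σ t)

lemma mul_dotProduct_self_le_wGram (lam : ℝ) (a : ℕ → Fin d → ℝ) (σ : ℕ → ℝ) (t : ℕ)
    (y : Fin d → ℝ) : lam * (y ⬝ᵥ y) ≤ y ⬝ᵥ (wGram lam a σ t *ᵥ y) := by
  have h := (posSemidef_wGram_sub lam a σ t).dotProduct_mulVec_nonneg y
  rwa [sub_mulVec, dotProduct_sub, smul_mulVec, one_mulVec, dotProduct_smul, sub_nonneg] at h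

lemma leverage_nonneg (hlam : 0 < lam) (a : ℕ → Fin d → ℝ) (σ : ℕ → ℝ) (t : ℕ) :
    0 ≤ leverage lam a σ t :=
  (posDef_wGram hlam a σ t).inv.posSemidef.dotProduct_mulVec_nonneg _

lemma gain_mem_Icc (hlam : 0 < lam) (a : ℕ → Fin d → ℝ) (σ : ℕ → ℝ) (t : ℕ) :
    gain lam a σ t ∈ Set.Icc 0 1 := by
  have hw := leverage_nonneg hlam a σ t
  exact ⟨div_nonneg hw (by linarith), div_le_one_of_le₀ (by linarith) (by linarith)⟩

lemma noiseNorm_zero (lam : ℝ) (a : ℕ → Fin d → ℝ) (σ ε : ℕ → ℝ) :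
    noiseNorm lam a σ ε 0 = 0 := by
  simp [noiseNorm, noiseSum, matNorm]

lemma crossCoeff_sq_le (hlam : 0 < lam) (a : ℕ → Fin d → ℝ) (σ ε : ℕ → ℝ) (t : ℕ) :
    crossCoeff lam a σ ε t ^ 2 ≤
      gain lam a σ t * (1 - gain lam a σ t) * noiseNorm lam a σ ε t ^ 2 := by
  have hZ := (posDef_wGram hlam a σ t).inv.posSemidef
  have hw := leverage_nonneg hlam a σ t
  have hcs : (scaledAction a σ (t + 1) ⬝ᵥ ((wGram lam a σ t)⁻¹ *ᵥ noiseSum a σ ε t)) ^ 2 ≤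
      leverage lam a σ t * noiseNorm lam a σ ε t ^ 2 := by
    rw [leverage, ← matNorm_sq hZ, noiseNorm, ← mul_pow, ← sq_abs]
    exact pow_le_pow_left₀ (abs_nonneg _) (abs_dotProduct_mulVec_le hZ _ _) 2
  calc crossCoeff lam a σ ε t ^ 2
      ≤ leverage lam a σ t * noiseNorm lam a σ ε t ^ 2 / (1 + leverage lam a σ t) ^ 2 := by
        rw [crossCoeff, div_pow]
        gcongr
    _ = _ := by
        rw [gain]
        field_simp
        ring

lemma noiseNorm_sq_succ_le (hlam : 0 < lam) (a : ℕ → Fin d → ℝ) (σ ε : ℕ → ℝ) (t : ℕ) :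
    noiseNorm lam a σ ε (t + 1) ^ 2 ≤ noiseNorm lam a σ ε t ^ 2 +
      2 * crossCoeff lam a σ ε t * (ε (t + 1) / σ (t + 1)) +
      gain lam a σ t * (ε (t + 1) / σ (t + 1)) ^ 2 := by
  have hZ := posDef_wGram hlam a σ t
  rw [noiseNorm, matNorm_sq (posDef_wGram hlam a σ (t + 1)).inv.posSemidef, wGram_succ, noiseSum,
    sum_Icc_succ_top (Nat.le_add_left 1 t), ← noiseSum, dotProduct_inv_add_vecMulVec_mulVec hZ,
    noiseNorm, matNorm_sq hZ.inv.posSemidef]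
  exact sub_le_self _ (div_nonneg (sq_nonneg _) (add_nonneg zero_le_one
    (leverage_nonneg hlam a σ t)))

/-! ### The elliptical potential -/

lemma log_det_wGram (hlam : 0 < lam) (a : ℕ → Fin d → ℝ) (σ : ℕ → ℝ) (t : ℕ) :
    Real.log (wGram lam a σ t).det =
      d * Real.log lam + ∑ i ∈ range t, Real.log (1 + leverage lam a σ i) := by
  induction t with
  | zero => simp [wGram_zero]
  | succ t ih =>
    have hw := leverage_nonneg hlam a σ t
    rw [wGram_succ, det_add_vecMulVec (posDef_wGram hlam a σ t).isUnit, ← leverage,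
      Real.log_mul (posDef_wGram hlam a σ t).det_pos.ne' (by positivity), ih, sum_range_succ,
      add_assoc]

lemma trace_wGram (lam : ℝ) (a : ℕ → Fin d → ℝ) (σ : ℕ → ℝ) (t : ℕ) :
    (wGram lam a σ t).trace = d * lam + ∑ i ∈ Icc 1 t, a i ⬝ᵥ a i / σ i ^ 2 := by
  simp [wGram, trace_add, trace_sum, trace_smul, trace_vecMulVec, mul_comm, div_eq_mul_inv]

lemma trace_wGram_le {A s : ℝ} {t : ℕ} (hs : 0 < s) (hσ : ∀ i ∈ Icc 1 t, s ≤ σ i)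
    (ha : ∀ i ∈ Icc 1 t, √(a i ⬝ᵥ a i) ≤ A) :
    (wGram lam a σ t).trace ≤ d * lam + t * (A ^ 2 / s ^ 2) := by
  have hterm : ∀ i ∈ Icc 1 t, a i ⬝ᵥ a i / σ i ^ 2 ≤ A ^ 2 / s ^ 2 := fun i hi =>
    div_le_div₀ (sq_nonneg A) (Real.sqrt_le_iff.mp (ha i hi)).2 (by positivity)
      (pow_le_pow_left₀ hs.le (hσ i hi) 2)
  simpa [trace_wGram] using sum_le_card_nsmul _ _ _ hterm

lemma sum_log_one_add_leverage_le {A s : ℝ} {t : ℕ} (hlam : 0 < lam) (hs : 0 < s)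
    (hσ : ∀ i ∈ Icc 1 t, s ≤ σ i) (ha : ∀ i ∈ Icc 1 t, √(a i ⬝ᵥ a i) ≤ A) :
    ∑ i ∈ range t, Real.log (1 + leverage lam a σ i) ≤
      d * Real.log (1 + t * A ^ 2 / (d * lam * s ^ 2)) := by
  rcases d.eq_zero_or_pos with rfl | hd
  · simp [leverage]
  have : Nonempty (Fin d) := ⟨⟨0, hd⟩⟩
  have hd' : (0 : ℝ) < d := by exact_mod_cast hd
  have hZ := posDef_wGram hlam a σ t
  have htrace : (wGram lam a σ t).trace / d ≤ lam * (1 + t * A ^ 2 / (d * lam * s ^ 2)) := by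
    rw [div_le_iff₀ hd']
    refine (trace_wGram_le hs hσ ha).trans_eq ?_
    field_simp
  have hlog : Real.log ((wGram lam a σ t).trace / d) ≤
      Real.log lam + Real.log (1 + t * A ^ 2 / (d * lam * s ^ 2)) := by
    rw [← Real.log_mul hlam.ne' (by positivity)]
    exact Real.log_le_log (div_pos hZ.trace_pos hd') htrace
  have hdet := log_det_le_card_mul_log_trace_div hZ
  rw [log_det_wGram hlam, Fintype.card_fin] at hdet
  linarith [mul_le_mul_of_nonneg_left hlog hd'.le]

lemma min_one_le_two_mul_log_one_add {w : ℝ} (hw : 0 ≤ w) : min 1 w ≤ 2 * Real.log (1 + w) := by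
  have hlog := Real.le_log_one_add_of_nonneg hw
  have hmin : min 1 w ≤ 2 * (2 * w / (w + 2)) := by
    rw [mul_div_assoc', le_div_iff₀ (by positivity)]
    rcases le_total 1 w with h | h
    · rw [min_eq_left h]; linarith
    · rw [min_eq_right h]; nlinarith
  linarith

lemma div_one_add_le_log_one_add {w : ℝ} (hw : 0 ≤ w) : w / (1 + w) ≤ Real.log (1 + w) := by
  refine le_trans ?_ (Real.le_log_one_add_of_nonneg hw)
  rw [div_le_div_iff₀ (by positivity) (by positivity)]
  nlinarith

/-! ### Deviation of the estimator -/

lemma wEst_eq (hlam : 0 < lam) (a : ℕ → Fin d → ℝ) (σ ε : ℕ → ℝ) (μ : Fin d → ℝ) (t : ℕ) :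
    wEst lam a σ (fun i => μ ⬝ᵥ a i + ε i) t =
      μ - (wGram lam a σ t)⁻¹ *ᵥ (lam • μ - noiseSum a σ ε t) := by
  have hsignal : ∑ i ∈ Icc 1 t, ((σ i ^ 2)⁻¹ * (μ ⬝ᵥ a i)) • a i =
      wGram lam a σ t *ᵥ μ - lam • μ := by
    simp only [wGram, add_mulVec, smul_mulVec, one_mulVec, sum_mulVec, vecMulVec_mulVec,
      op_smul_eq_smul, smul_smul, dotProduct_comm μ, add_sub_cancel_left]
  have hnoise : ∑ i ∈ Icc 1 t, ((σ i ^ 2)⁻¹ * ε i) • a i = noiseSum a σ ε t := by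
    refine sum_congr rfl fun i _ => ?_
    rw [scaledAction, smul_smul]
    congr 1
    ring
  simp only [wEst, mul_add, add_smul, sum_add_distrib, hsignal, hnoise]
  rw [sub_add, mulVec_sub, inv_mulVec_mulVec (posDef_wGram hlam a σ t).isUnit]

lemma matNorm_sub_wEst_le {B : ℝ} {μ : Fin d → ℝ} (hlam : 0 < lam) (hμ : √(μ ⬝ᵥ μ) ≤ B)
    (a : ℕ → Fin d → ℝ) (σ ε : ℕ → ℝ) (t : ℕ) :
    matNorm (wGram lam a σ t) (μ - wEst lam a σ (fun i => μ ⬝ᵥ a i + ε i) t) ≤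
      noiseNorm lam a σ ε t + √lam * B := by
  have hZ := posDef_wGram hlam a σ t
  have hshrink : √lam * matNorm (wGram lam a σ t)⁻¹ μ ≤ B :=
    (sqrt_mul_matNorm_inv_le hZ hlam.le (mul_dotProduct_self_le_wGram lam a σ t) μ).trans hμ
  have hbias : matNorm (wGram lam a σ t)⁻¹ (lam • μ) ≤ √lam * B := by
    rw [matNorm_smul, abs_of_pos hlam]
    calc lam * matNorm (wGram lam a σ t)⁻¹ μ
        = √lam * (√lam * matNorm (wGram lam a σ t)⁻¹ μ) := by
          rw [← mul_assoc, Real.mul_self_sqrt hlam.le]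
      _ ≤ √lam * B := by gcongr
  rw [wEst_eq hlam, sub_sub_cancel, matNorm_inv_mulVec hZ]
  linarith [matNorm_sub_le hZ.inv.posSemidef (lam • μ) (noiseSum a σ ε t),
    show matNorm (wGram lam a σ t)⁻¹ (noiseSum a σ ε t) = noiseNorm lam a σ ε t from rfl]

lemma mem_confSet_of_noiseNorm_le {B β : ℝ} {μ : Fin d → ℝ} {t : ℕ} (hlam : 0 < lam)
    (hμ : √(μ ⬝ᵥ μ) ≤ B) (hβ : noiseNorm lam a σ ε t ≤ β) :
    μ ∈ confSet lam B β (wGram lam a σ t) (wEst lam a σ (fun i => μ ⬝ᵥ a i + ε i) t) :=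
  (matNorm_sub_wEst_le hlam hμ a σ ε t).trans (by gcongr)

end Trajectory

/-! ### Measurability of the trajectory -/

section Measurability

variable {Ω : Type*} [MeasurableSpace Ω] {d : ℕ}

section MatrixValued

variable {M : Ω → Matrix (Fin d) (Fin d) ℝ} {x y : Ω → Fin d → ℝ}

lemma measurable_det (hM : ∀ j k, Measurable fun ω => M ω j k) :
    Measurable fun ω => (M ω).det := by
  simp only [det_apply]
  exact Finset.measurable_fun_sum _ fun τ _ =>
    (Finset.measurable_fun_prod _ fun i _ => hM (τ i) i).const_smul _

lemma measurable_inv_apply (hM : ∀ j k, Measurable fun ω => M ω j k) (j k : Fin d) :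
    Measurable fun ω => (M ω)⁻¹ j k := by
  have hadj : Measurable fun ω => (M ω).adjugate j k := by
    simp only [adjugate_apply]
    refine measurable_det fun i l => ?_
    simp only [updateRow_apply]
    split_ifs
    exacts [measurable_const, hM i l]
  simp only [Matrix.inv_def, Matrix.smul_apply, Ring.inverse_eq_inv', smul_eq_mul]
  exact (measurable_det hM).inv.mul hadj

lemma measurable_dotProduct (hx : Measurable x) (hy : Measurable y) :
    Measurable fun ω => x ω ⬝ᵥ y ω :=
  Finset.measurable_fun_sum _ fun i _ => (hx.eval (a := i)).mul (hy.eval (a := i))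

lemma measurable_mulVec (hM : ∀ j k, Measurable fun ω => M ω j k) (hy : Measurable y) :
    Measurable fun ω => M ω *ᵥ y ω :=
  measurable_pi_lambda _ fun j => measurable_dotProduct (measurable_pi_lambda _ (hM j)) hy

lemma measurable_matNorm (hM : ∀ j k, Measurable fun ω => M ω j k) (hy : Measurable y) :
    Measurable fun ω => matNorm (M ω) (y ω) :=
  (measurable_dotProduct hy (measurable_mulVec hM hy)).sqrt

end MatrixValued

variable {a : ℕ → Ω → Fin d → ℝ} {σ ε : ℕ → Ω → ℝ} {t : ℕ}

lemma measurable_sbMin (ht : 1 ≤ t) (hσ : ∀ i ∈ Icc 1 t, Measurable (σ i)) :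
    Measurable fun ω => sbMin (σ · ω) t := by
  have hinf : Measurable ((Icc 1 t).inf' (nonempty_Icc.mpr ht) σ) :=
    Finset.inf'_induction _ _ (fun _ hf _ hg => hf.inf hg) hσ
  convert hinf using 2 with ω
  rw [sbMin_eq_inf' _ ht, Finset.inf'_apply]

lemma measurable_scaledAction (ha : Measurable (a t)) (hσ : Measurable (σ t)) :
    Measurable fun ω => scaledAction (a · ω) (σ · ω) t :=
  hσ.inv.smul ha

lemma measurable_noiseSum (ha : ∀ i ∈ Icc 1 t, Measurable (a i))
    (hσ : ∀ i ∈ Icc 1 t, Measurable (σ i)) (hε : ∀ i ∈ Icc 1 t, Measurable (ε i)) :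
    Measurable fun ω => noiseSum (a · ω) (σ · ω) (ε · ω) t :=
  Finset.measurable_fun_sum _ fun i hi =>
    ((hε i hi).div (hσ i hi)).smul (measurable_scaledAction (ha i hi) (hσ i hi))

lemma measurable_wGram_apply (lam : ℝ) (ha : ∀ i ∈ Icc 1 t, Measurable (a i))
    (hσ : ∀ i ∈ Icc 1 t, Measurable (σ i)) (j k : Fin d) :
    Measurable fun ω => wGram lam (a · ω) (σ · ω) t j k := by
  simp only [wGram, Matrix.add_apply, Matrix.smul_apply, Matrix.sum_apply, vecMulVec_apply,
    smul_eq_mul]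
  exact measurable_const.add <| Finset.measurable_fun_sum _ fun i hi =>
    ((hσ i hi).pow_const 2).inv.mul
      (((ha i hi).eval (a := j)).mul ((ha i hi).eval (a := k)))

lemma measurable_noiseNorm (lam : ℝ) (ha : ∀ i ∈ Icc 1 t, Measurable (a i))
    (hσ : ∀ i ∈ Icc 1 t, Measurable (σ i)) (hε : ∀ i ∈ Icc 1 t, Measurable (ε i)) :
    Measurable fun ω => noiseNorm lam (a · ω) (σ · ω) (ε · ω) t :=
  measurable_matNorm (measurable_inv_apply (measurable_wGram_apply lam ha hσ))
    (measurable_noiseSum ha hσ hε)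

lemma measurable_leverage (lam : ℝ) (ha : ∀ i ∈ Icc 1 (t + 1), Measurable (a i))
    (hσ : ∀ i ∈ Icc 1 (t + 1), Measurable (σ i)) :
    Measurable fun ω => leverage lam (a · ω) (σ · ω) t := by
  have hsub : Icc 1 t ⊆ Icc 1 (t + 1) := Icc_subset_Icc_right t.le_succ
  have hlast : t + 1 ∈ Icc 1 (t + 1) := right_mem_Icc.mpr (Nat.le_add_left 1 t)
  have hx := measurable_scaledAction (ha _ hlast) (hσ _ hlast)
  exact measurable_dotProduct hx (measurable_mulVec (measurable_inv_apply
    (measurable_wGram_apply lam (fun i hi => ha i (hsub hi)) fun i hi => hσ i (hsub hi))) hx)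

lemma measurable_gain (lam : ℝ) (ha : ∀ i ∈ Icc 1 (t + 1), Measurable (a i))
    (hσ : ∀ i ∈ Icc 1 (t + 1), Measurable (σ i)) :
    Measurable fun ω => gain lam (a · ω) (σ · ω) t :=
  (measurable_leverage lam ha hσ).div ((measurable_leverage lam ha hσ).const_add 1)

lemma measurable_crossCoeff (lam : ℝ) (ha : ∀ i ∈ Icc 1 (t + 1), Measurable (a i))
    (hσ : ∀ i ∈ Icc 1 (t + 1), Measurable (σ i)) (hε : ∀ i ∈ Icc 1 t, Measurable (ε i)) :
    Measurable fun ω => crossCoeff lam (a · ω) (σ · ω) (ε · ω) t := by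
  have hsub : Icc 1 t ⊆ Icc 1 (t + 1) := Icc_subset_Icc_right t.le_succ
  have hlast : t + 1 ∈ Icc 1 (t + 1) := right_mem_Icc.mpr (Nat.le_add_left 1 t)
  have ha' : ∀ i ∈ Icc 1 t, Measurable (a i) := fun i hi => ha i (hsub hi)
  have hσ' : ∀ i ∈ Icc 1 t, Measurable (σ i) := fun i hi => hσ i (hsub hi)
  exact (measurable_dotProduct (measurable_scaledAction (ha _ hlast) (hσ _ hlast))
    (measurable_mulVec (measurable_inv_apply (measurable_wGram_apply lam ha' hσ'))
      (measurable_noiseSum ha' hσ' hε))).div ((measurable_leverage lam ha hσ).const_add 1)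

end Measurability

/-! ### Confidence sets -/

section Confidence

/-- The stochastic assumptions on a weighted linear bandit: predictable actions `a` and weights `σ`,
and martingale-difference noise `ε` bounded by `R` with conditional standard deviation at most `σ`.
Rounds are numbered from `1`, and the noise of round `t` is revealed at time `t + 1`. -/
structure BanditNoise {Ω : Type*} {m : MeasurableSpace Ω} (P : Measure Ω) (G : Filtration ℕ m)
    {d : ℕ} (R : ℝ) (a : ℕ → Ω → Fin d → ℝ) (σ ε : ℕ → Ω → ℝ) : Prop where
  measurable_action : ∀ t, 1 ≤ t → Measurable[G t] (a t)
  measurable_weight : ∀ t, 1 ≤ t → Measurable[G t] (σ t)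
  weight_pos : ∀ t, 1 ≤ t → ∀ ω, 0 < σ t ω
  measurable_noise : ∀ t, 1 ≤ t → Measurable[G (t + 1)] (ε t)
  abs_noise_le : ∀ t, 1 ≤ t → ∀ᵐ ω ∂P, |ε t ω| ≤ R
  condExp_eq_zero : ∀ t, 1 ≤ t → P[ε t | G t] =ᵐ[P] 0
  condExp_sq_le : ∀ t, 1 ≤ t → P[fun ω => ε t ω ^ 2 | G t] ≤ᵐ[P] fun ω => σ t ω ^ 2

variable {Ω : Type*} {m : MeasurableSpace Ω} {P : Measure Ω} {G : Filtration ℕ m} {d : ℕ}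
  {lam δ A B R : ℝ} {a : ℕ → Ω → Fin d → ℝ} {σ ε : ℕ → Ω → ℝ}

/-- The filtration with its first step dropped, which lets rounds be numbered from `0`. -/
def tailFiltration (G : Filtration ℕ m) : Filtration ℕ m where
  seq t := G (t + 1)
  mono' _ _ hst := G.mono (Nat.succ_le_succ hst)
  le' t := G.le (t + 1)

namespace BanditNoise

lemma sbMin_pos (h : BanditNoise P G R a σ ε) {t : ℕ} (ht : 1 ≤ t) (ω : Ω) :
    0 < sbMin (σ · ω) t :=
  WeightedOFUL.sbMin_pos (fun i hi => h.weight_pos i hi ω) ht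

lemma measurable_action_of_mem (h : BanditNoise P G R a σ ε) {t i : ℕ} (hi : i ∈ Icc 1 t) :
    Measurable[G t] (a i) :=
  (h.measurable_action i (mem_Icc.mp hi).1).mono (G.mono (mem_Icc.mp hi).2) le_rfl

lemma measurable_weight_of_mem (h : BanditNoise P G R a σ ε) {t i : ℕ} (hi : i ∈ Icc 1 t) :
    Measurable[G t] (σ i) :=
  (h.measurable_weight i (mem_Icc.mp hi).1).mono (G.mono (mem_Icc.mp hi).2) le_rfl

lemma measurable_noise_of_mem (h : BanditNoise P G R a σ ε) {t i : ℕ} (hi : i ∈ Icc 1 t) :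
    Measurable[G (t + 1)] (ε i) :=
  (h.measurable_noise i (mem_Icc.mp hi).1).mono
    (G.mono (Nat.succ_le_succ (mem_Icc.mp hi).2)) le_rfl

lemma weightedNoise [IsFiniteMeasure P] (h : BanditNoise P G R a σ ε) (hR : 0 < R) :
    WeightedNoise P (tailFiltration G) (fun t => ε (t + 1)) (fun t => σ (t + 1))
      (fun t ω => R / sbMin (σ · ω) (t + 1)) where
  memLp t := .of_bound ((h.measurable_noise _ t.succ_pos).mono (G.le _) le_rfl).aestronglyMeasurable
    R (h.abs_noise_le _ t.succ_pos)
  condExp_eq_zero t := h.condExp_eq_zero _ t.succ_pos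
  condExp_sq_le t := h.condExp_sq_le _ t.succ_pos
  measurable_scale t := h.measurable_weight _ t.succ_pos
  scale_pos t := h.weight_pos _ t.succ_pos
  measurable_bound t := by
    let := G (t + 1)
    exact (measurable_sbMin t.succ_pos fun _ => h.measurable_weight_of_mem).const_div R
  bound_pos t ω := div_pos hR (h.sbMin_pos t.succ_pos ω)
  bound_mono ω s t hst := div_le_div_of_nonneg_left hR.le (h.sbMin_pos t.succ_pos ω)
    (sbMin_anti s.succ_pos (Nat.succ_le_succ hst))
  abs_div_le t := by
    filter_upwards [h.abs_noise_le _ t.succ_pos] with ω hω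
    rw [abs_div, abs_of_pos (h.weight_pos _ t.succ_pos ω)]
    exact div_le_div₀ hR.le hω (h.sbMin_pos t.succ_pos ω)
      (sbMin_le (right_mem_Icc.mpr t.succ_pos))

lemma selfNormalizedRecursion (h : BanditNoise P G R a σ ε) (hlam : 0 < lam) :
    SelfNormalizedRecursion (tailFiltration G) (fun t ω => ε (t + 1) ω / σ (t + 1) ω)
      (fun t ω => gain lam (a · ω) (σ · ω) t)
      (fun t ω => crossCoeff lam (a · ω) (σ · ω) (ε · ω) t)
      (fun t ω => noiseNorm lam (a · ω) (σ · ω) (ε · ω) t) where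
  measurable_norm t := by
    let := G (t + 1)
    have hsub : Icc 1 t ⊆ Icc 1 (t + 1) := Icc_subset_Icc_right t.le_succ
    exact measurable_noiseNorm lam (fun _ hi => h.measurable_action_of_mem (hsub hi))
      (fun _ hi => h.measurable_weight_of_mem (hsub hi)) fun _ => h.measurable_noise_of_mem
  measurable_gain t := by
    let := G (t + 1)
    exact measurable_gain lam (fun _ => h.measurable_action_of_mem)
      fun _ => h.measurable_weight_of_mem
  measurable_cross t := by
    let := G (t + 1)
    exact measurable_crossCoeff lam (fun _ => h.measurable_action_of_mem)
      (fun _ => h.measurable_weight_of_mem) fun _ => h.measurable_noise_of_mem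
  norm_zero _ := noiseNorm_zero _ _ _ _
  norm_nonneg _ _ := matNorm_nonneg _ _
  gain_mem _ _ := gain_mem_Icc hlam _ _ _
  cross_sq_le _ _ := crossCoeff_sq_le hlam _ _ _ _
  norm_sq_succ_le _ _ := noiseNorm_sq_succ_le hlam _ _ _ _

end BanditNoise

lemma sum_gain_le {a : ℕ → Fin d → ℝ} {σ : ℕ → ℝ} {s : ℝ} {t : ℕ} (hlam : 0 < lam) (hs : 0 < s)
    (hσ : ∀ i ∈ Icc 1 t, s ≤ σ i) (ha : ∀ i ∈ Icc 1 t, √(a i ⬝ᵥ a i) ≤ A) :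
    ∑ i ∈ range t, gain lam a σ i ≤ d * Real.log (1 + t * A ^ 2 / (d * lam * s ^ 2)) :=
  (sum_le_sum fun i _ => div_one_add_le_log_one_add (leverage_nonneg hlam a σ i)).trans
    (sum_log_one_add_leverage_le hlam hs hσ ha)

lemma one_le_log_four_mul_sq_div (hδ0 : 0 < δ) (hδ1 : δ ≤ 1) {x : ℝ} (hx : 1 ≤ x) :
    1 ≤ Real.log (4 * x ^ 2 / δ) := by
  rw [Real.le_log_iff_exp_le (by positivity)]
  calc Real.exp 1 ≤ 4 := by linarith [Real.exp_one_lt_d9]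
    _ ≤ 4 * x ^ 2 := by linarith [one_le_pow₀ hx (n := 2)]
    _ ≤ 4 * x ^ 2 / δ := le_div_self (by positivity) hδ0 hδ1

lemma mul_exp_neg_mul_log_le (hδ0 : 0 < δ) (hδ1 : δ ≤ 1) {x : ℝ} (hx : 1 ≤ x) :
    x * Real.exp (-(5 / 2) * Real.log (4 * x ^ 2 / δ)) ≤ δ * (1 / x - 1 / (x + 1)) := by
  set L := Real.log (4 * x ^ 2 / δ)
  have hL : 1 ≤ L := one_le_log_four_mul_sq_div hδ0 hδ1 hx
  calc x * Real.exp (-(5 / 2) * L) ≤ x * Real.exp (-L + -L) := by gcongr; linarith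
    _ = δ * δ / (16 * x ^ 3) := by
        rw [Real.exp_add, Real.exp_neg, Real.exp_log (by positivity)]
        field_simp
        norm_num
    _ ≤ δ / (x * (x + 1)) := by
        refine div_le_div₀ hδ0.le (mul_le_of_le_one_right hδ0.le hδ1) (by positivity) ?_
        nlinarith [pow_le_pow_right₀ hx (show 2 ≤ 3 by norm_num)]
    _ = δ * (1 / x - 1 / (x + 1)) := by
        field_simp
        ring

lemma tsum_ofReal_mul_telescope (hδ : 0 ≤ δ) :
    ∑' t : ℕ, ENNReal.ofReal (δ * (1 / (t + 1) - 1 / (t + 1 + 1))) = ENNReal.ofReal δ := by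
  have hnonneg (t : ℕ) : 0 ≤ δ * (1 / ((t : ℝ) + 1) - 1 / (t + 1 + 1)) :=
    mul_nonneg hδ (sub_nonneg.mpr (by gcongr; linarith))
  have hpartial (n : ℕ) : ∑ t ∈ range n, δ * (1 / ((t : ℝ) + 1) - 1 / (t + 1 + 1)) =
      δ * (1 - 1 / (n + 1)) := by
    rw [← mul_sum]
    simpa using congrArg (δ * ·) (sum_range_sub' (fun t : ℕ => 1 / ((t : ℝ) + 1)) n)
  have hsum : HasSum (fun t : ℕ => δ * (1 / ((t : ℝ) + 1) - 1 / (t + 1 + 1))) δ := by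
    rw [hasSum_iff_tendsto_nat_of_nonneg hnonneg]
    simp only [hpartial]
    simpa using (tendsto_one_div_add_atTop_nhds_zero_nat.const_sub 1).const_mul δ
  rw [← ENNReal.ofReal_tsum_of_nonneg hnonneg hsum.summable, hsum.tsum_eq]

lemma betaHat_eq_four_mul_threshold (d : ℕ) (A R lam δ : ℝ) (σ : ℕ → ℝ) {t : ℕ} (ht : t ≠ 0) :
    betaHat d A R lam δ σ t = 4 * threshold (Real.log (4 * t ^ 2 / δ))
      (d * Real.log (1 + t * A ^ 2 / (d * lam * sbMin σ t ^ 2))) (R / sbMin σ t) := by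
  rw [betaHat, if_neg ht, threshold]
  ring

lemma four_mul_threshold_sum_gain_le_betaHat {a : ℕ → Fin d → ℝ} {σ : ℕ → ℝ} {t : ℕ}
    (hlam : 0 < lam) (hδ0 : 0 < δ) (hδ1 : δ ≤ 1) (ht : 1 ≤ t) (hσ : ∀ i, 1 ≤ i → 0 < σ i)
    (ha : ∀ i ∈ Icc 1 t, √(a i ⬝ᵥ a i) ≤ A) :
    4 * threshold (Real.log (4 * t ^ 2 / δ)) (∑ i ∈ range t, gain lam a σ i) (R / sbMin σ t) ≤
      betaHat d A R lam δ σ t := by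
  have hlog := one_le_log_four_mul_sq_div hδ0 hδ1 (Nat.one_le_cast.mpr ht)
  rw [betaHat_eq_four_mul_threshold _ _ _ _ _ _ (Nat.one_le_iff_ne_zero.mp ht)]
  gcongr
  exact threshold_mono (zero_le_one.trans hlog)
    (sum_gain_le hlam (sbMin_pos hσ ht) (fun _ => sbMin_le) ha) le_rfl

lemma betaHat_nonneg {σ : ℕ → ℝ} (hδ0 : 0 < δ) (hδ1 : δ ≤ 1) (hR : 0 ≤ R)
    (hσ : ∀ i, 1 ≤ i → 0 < σ i) (t : ℕ) : 0 ≤ betaHat d A R lam δ σ t := by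
  rcases t.eq_zero_or_pos with rfl | ht
  · simp [betaHat]
  have hlog := one_le_log_four_mul_sq_div hδ0 hδ1 (Nat.one_le_cast.mpr ht)
  rw [betaHat_eq_four_mul_threshold _ _ _ _ _ _ ht.ne']
  exact mul_nonneg zero_le_four <| (mul_nonneg (div_nonneg hR (sbMin_pos hσ ht).le)
    (zero_le_one.trans hlog)).trans mul_le_threshold

lemma noiseNorm_eq_zero {a : ℕ → Fin d → ℝ} {σ ε : ℕ → ℝ} {t : ℕ} (hε : ∀ i ∈ Icc 1 t, ε i = 0) :
    noiseNorm lam a σ ε t = 0 := by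
  have hsum : noiseSum a σ ε t = 0 := sum_eq_zero fun i hi => by rw [hε i hi, zero_div, zero_smul]
  simp [noiseNorm, hsum, matNorm]

namespace BanditNoise

lemma bound_nonneg [IsProbabilityMeasure P] (h : BanditNoise P G R a σ ε) : 0 ≤ R := by
  obtain ⟨ω, hω⟩ := (h.abs_noise_le 1 le_rfl).exists
  exact (abs_nonneg _).trans hω

lemma ae_noiseNorm_eq_zero (h : BanditNoise P G 0 a σ ε) (lam : ℝ) (t : ℕ) :
    ∀ᵐ ω ∂P, noiseNorm lam (a · ω) (σ · ω) (ε · ω) t = 0 := by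
  have hε : ∀ᵐ ω ∂P, ∀ i, 1 ≤ i → ε i ω = 0 := by
    rw [ae_all_iff]
    refine fun i => ae_all_iff.mpr fun hi => ?_
    filter_upwards [h.abs_noise_le i hi] with ω hω
    exact abs_nonpos_iff.mp hω
  filter_upwards [hε] with ω hω
  exact noiseNorm_eq_zero fun i hi => hω i (mem_Icc.mp hi).1

lemma measure_betaHat_lt_noiseNorm_le [IsProbabilityMeasure P] (h : BanditNoise P G R a σ ε)
    (hlam : 0 < lam) (hδ0 : 0 < δ) (hδ1 : δ ≤ 1)
    (ha : ∀ t, 1 ≤ t → ∀ ω, √(a t ω ⬝ᵥ a t ω) ≤ A) (t : ℕ) :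
    P {ω | betaHat d A R lam δ (σ · ω) (t + 1) < noiseNorm lam (a · ω) (σ · ω) (ε · ω) (t + 1)} ≤
      ENNReal.ofReal (δ * (1 / (t + 1) - 1 / (t + 1 + 1))) := by
  have ht : (1 : ℝ) ≤ (t + 1 : ℕ) := by exact_mod_cast t.succ_pos
  rcases h.bound_nonneg.eq_or_lt with rfl | hR
  · refine (measure_mono_null (fun ω hω => ?_)
      (ae_iff.mp (h.ae_noiseNorm_eq_zero lam (t + 1)))).le.trans zero_le
    exact ((betaHat_nonneg hδ0 hδ1 le_rfl (fun i hi => h.weight_pos i hi ω) _).trans_lt hω).ne'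
  · calc _ ≤ _ := measure_mono fun ω hω =>
          (four_mul_threshold_sum_gain_le_betaHat hlam hδ0 hδ1 t.succ_pos
            (fun i hi => h.weight_pos i hi ω) fun i hi => ha i (mem_Icc.mp hi).1 ω).trans_lt hω
      _ ≤ _ := measure_four_mul_gainThreshold_lt_le (h.weightedNoise hR)
          (h.selfNormalizedRecursion hlam) (one_le_log_four_mul_sq_div hδ0 hδ1 ht) t
      _ ≤ _ := ENNReal.ofReal_le_ofReal (by
          simpa using mul_exp_neg_mul_log_le hδ0 hδ1 ht)

theorem le_measure_forall_mem_confSet [IsProbabilityMeasure P] (h : BanditNoise P G R a σ ε)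
    (hlam : 0 < lam) (hδ0 : 0 < δ) (hδ1 : δ ≤ 1) {μ : Fin d → ℝ} (hμ : √(μ ⬝ᵥ μ) ≤ B)
    (ha : ∀ t, 1 ≤ t → ∀ ω, √(a t ω ⬝ᵥ a t ω) ≤ A) :
    ENNReal.ofReal (1 - δ) ≤
      P {ω | ∀ t, μ ∈ confSet lam B (betaHat d A R lam δ (σ · ω) t) (wGram lam (a · ω) (σ · ω) t)
        (wEst lam (a · ω) (σ · ω) (fun i => μ ⬝ᵥ a i ω + ε i ω) t)} := by
  set good : Set Ω := {ω | ∀ t, μ ∈ confSet lam B (betaHat d A R lam δ (σ · ω) t)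
    (wGram lam (a · ω) (σ · ω) t) (wEst lam (a · ω) (σ · ω) (fun i => μ ⬝ᵥ a i ω + ε i ω) t)}
  set bad : ℕ → Set Ω := fun t =>
    {ω | betaHat d A R lam δ (σ · ω) (t + 1) < noiseNorm lam (a · ω) (σ · ω) (ε · ω) (t + 1)}
  have hsub : goodᶜ ⊆ ⋃ t, bad t := by
    refine Set.compl_subset_comm.mp fun ω hω t => mem_confSet_of_noiseNorm_le hlam hμ ?_
    rcases t with _ | t
    · exact (noiseNorm_zero _ _ _ _).trans_le (by simp [betaHat])
    · exact not_lt.mp fun hlt => hω (Set.mem_iUnion.mpr ⟨t, hlt⟩)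
  have hbad : P goodᶜ ≤ ENNReal.ofReal δ :=
    calc P goodᶜ ≤ ∑' t, P (bad t) := (measure_mono hsub).trans (measure_iUnion_le _)
      _ ≤ _ := ENNReal.tsum_le_tsum fun t =>
          h.measure_betaHat_lt_noiseNorm_le hlam hδ0 hδ1 ha t
      _ = ENNReal.ofReal δ := tsum_ofReal_mul_telescope hδ0.le
  rw [ENNReal.ofReal_sub _ hδ0.le, ENNReal.ofReal_one, tsub_le_iff_right, ← measure_univ (μ := P)]
  exact (measure_univ_le_add_compl good).trans (by gcongr)

end BanditNoise

end Confidence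

/-! ### Regret of one trajectory -/

section Regret

variable {d : ℕ} {lam A B R δ : ℝ}

lemma dotProduct_sub_le_of_optimistic {Z : Matrix (Fin d) (Fin d) ℝ} (hZ : Z.PosDef)
    {x x' μ μ' c : Fin d → ℝ} {β : ℝ} (hμ : matNorm Z (μ - c) ≤ β) (hμ' : matNorm Z (μ' - c) ≤ β)
    (hopt : x' ⬝ᵥ μ ≤ x ⬝ᵥ μ') : x' ⬝ᵥ μ - x ⬝ᵥ μ ≤ 2 * β * matNorm Z⁻¹ x := by
  have hdiff : matNorm Z (μ' - μ) ≤ 2 * β := by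
    have hsub := matNorm_sub_le hZ.posSemidef (μ' - c) (μ - c)
    rw [sub_sub_sub_cancel_right] at hsub
    linarith
  calc x' ⬝ᵥ μ - x ⬝ᵥ μ ≤ x ⬝ᵥ (μ' - μ) := by
        rw [dotProduct_sub]
        linarith
    _ ≤ matNorm Z⁻¹ x * matNorm Z (μ' - μ) := dotProduct_le_matNorm_inv_mul hZ x (μ' - μ)
    _ ≤ 2 * β * matNorm Z⁻¹ x := by
        rw [mul_comm]
        exact mul_le_mul_of_nonneg_right hdiff (matNorm_nonneg _ _)

lemma matNorm_inv_wGram_succ_action {a : ℕ → Fin d → ℝ} {σ : ℕ → ℝ} {t : ℕ}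
    (hσ : 0 < σ (t + 1)) :
    matNorm (wGram lam a σ t)⁻¹ (a (t + 1)) = σ (t + 1) * √(leverage lam a σ t) := by
  have hscale : a (t + 1) = σ (t + 1) • scaledAction a σ (t + 1) := by
    rw [scaledAction, smul_inv_smul₀ hσ.ne']
  rw [hscale, matNorm_smul, abs_of_pos hσ]
  rfl

lemma le_add_mul_sqrt_min {r c w : ℝ} (hr : r ≤ 2) (hc : 0 ≤ c) (hw : 0 ≤ w)
    (hrw : r ≤ 2 * c * √w) : r ≤ 2 * min 1 w + 2 * (c * √(min 1 w)) := by
  rcases le_total 1 w with h | h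
  · rw [min_eq_left h, Real.sqrt_one]
    linarith
  · rw [min_eq_right h]
    linarith

lemma sum_le_of_le_add_mul_sqrt {ι : Type*} {s : Finset ι} {r c q : ι → ℝ} {V : ℝ}
    (hq : ∀ i ∈ s, 0 ≤ q i) (hr : ∀ i ∈ s, r i ≤ 2 * q i + 2 * (c i * √(q i)))
    (hV : ∑ i ∈ s, q i ≤ V) :
    ∑ i ∈ s, r i ≤ 2 * V + 2 * √V * √(∑ i ∈ s, c i ^ 2) := by
  have hsqrt : ∑ i ∈ s, √(q i) ^ 2 = ∑ i ∈ s, q i :=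
    sum_congr rfl fun i hi => Real.sq_sqrt (hq i hi)
  calc ∑ i ∈ s, r i ≤ 2 * ∑ i ∈ s, q i + 2 * ∑ i ∈ s, c i * √(q i) := by
        rw [mul_sum, mul_sum, ← sum_add_distrib]
        exact sum_le_sum hr
    _ ≤ 2 * ∑ i ∈ s, q i + 2 * (√(∑ i ∈ s, c i ^ 2) * √(∑ i ∈ s, q i)) := by
        rw [← hsqrt]
        gcongr
        exact Real.sum_mul_le_sqrt_mul_sqrt s c fun i => √(q i)
    _ ≤ 2 * V + 2 * (√(∑ i ∈ s, c i ^ 2) * √V) := by gcongr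
    _ = _ := by ring

lemma sum_min_one_leverage_le {a : ℕ → Fin d → ℝ} {σ : ℕ → ℝ} {s : ℝ} {t : ℕ} (hlam : 0 < lam)
    (hs : 0 < s) (hσ : ∀ i ∈ Icc 1 t, s ≤ σ i) (ha : ∀ i ∈ Icc 1 t, √(a i ⬝ᵥ a i) ≤ A) :
    ∑ i ∈ range t, min 1 (leverage lam a σ i) ≤
      2 * d * Real.log (1 + t * A ^ 2 / (d * lam * s ^ 2)) := by
  calc _ ≤ ∑ i ∈ range t, 2 * Real.log (1 + leverage lam a σ i) :=
        sum_le_sum fun i _ => min_one_le_two_mul_log_one_add (leverage_nonneg hlam a σ i)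
    _ ≤ _ := by
        rw [← mul_sum, mul_assoc]
        gcongr
        exact sum_log_one_add_leverage_le hlam hs hσ ha

theorem regret_le_of_forall_mem_confSet {D : ℕ → Set (Fin d → ℝ)} {μ : Fin d → ℝ}
    {a a' : ℕ → Fin d → ℝ} {σ β : ℕ → ℝ} {c : ℕ → Fin d → ℝ} (hlam : 0 < lam)
    (hD : ∀ t, 1 ≤ t → ∀ v ∈ D t, √(v ⬝ᵥ v) ≤ A ∧ |v ⬝ᵥ μ| ≤ 1)
    (ha : ∀ t, 1 ≤ t → a t ∈ D t) (ha' : ∀ t, 1 ≤ t → a' t ∈ D t)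
    (hσ : ∀ t, 1 ≤ t → 0 < σ t)
    (hopt : ∀ t, 1 ≤ t → ∃ μt ∈ confSet lam B (β (t - 1)) (wGram lam a σ (t - 1)) (c (t - 1)),
      ∀ v ∈ D t, ∀ μ' ∈ confSet lam B (β (t - 1)) (wGram lam a σ (t - 1)) (c (t - 1)),
        v ⬝ᵥ μ' ≤ a t ⬝ᵥ μt)
    (hμ : ∀ t, μ ∈ confSet lam B (β t) (wGram lam a σ t) (c t)) {T : ℕ} (hT : 1 ≤ T) :
    ∑ t ∈ Icc 1 T, (a' t ⬝ᵥ μ - a t ⬝ᵥ μ) ≤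
      4 * d * Real.log (1 + T * A ^ 2 / (d * lam * sbMin σ T ^ 2)) +
        2 * √(2 * d * Real.log (1 + T * A ^ 2 / (d * lam * sbMin σ T ^ 2))) *
          √(∑ t ∈ Icc 1 T, (β (t - 1) + √lam * B) ^ 2 * σ t ^ 2) := by
  have hround (t : ℕ) : a' (t + 1) ⬝ᵥ μ - a (t + 1) ⬝ᵥ μ ≤ 2 * min 1 (leverage lam a σ t) +
      2 * ((β t + √lam * B) * σ (t + 1) * √(min 1 (leverage lam a σ t))) := by
    have ht : 1 ≤ t + 1 := t.succ_pos
    obtain ⟨μt, hμt, hmax⟩ := hopt (t + 1) ht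
    have hradius : 0 ≤ β t + √lam * B := (matNorm_nonneg _ _).trans (hμ t)
    refine le_add_mul_sqrt_min ?_ (mul_nonneg hradius (hσ _ ht).le) (leverage_nonneg hlam a σ t) ?_
    · linarith [(abs_le.mp (hD _ ht _ (ha' _ ht)).2).2, (abs_le.mp (hD _ ht _ (ha _ ht)).2).1]
    · refine (dotProduct_sub_le_of_optimistic (posDef_wGram hlam a σ t) (hμ t) hμt
        (hmax _ (ha' _ ht) μ (hμ t))).trans_eq ?_
      rw [matNorm_inv_wGram_succ_action (hσ _ ht)]
      ring
  have hpotential := sum_min_one_leverage_le hlam (sbMin_pos hσ hT) (fun _ => sbMin_le)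
    fun i hi => (hD i (mem_Icc.mp hi).1 _ (ha i (mem_Icc.mp hi).1)).1
  have hsum := sum_le_of_le_add_mul_sqrt
    (fun t _ => le_min zero_le_one (leverage_nonneg hlam a σ t)) (fun t _ => hround t) hpotential
  simp only [sum_Icc_one_eq_sum_range, add_tsub_cancel_right, ← mul_pow]
  exact hsum.trans_eq (by ring)

end Regret

end WeightedOFUL

theorem statement4_general {Ω : Type*} {m : MeasurableSpace Ω} (P : Measure Ω)
    [IsProbabilityMeasure P] (G : Filtration ℕ m) {d : ℕ}
    (lam δ B A R : ℝ) (μs : Fin d → ℝ)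
    (hlam : 0 < lam) (hδ0 : 0 < δ) (hδ1 : δ ≤ 1) (hμB : Real.sqrt (μs ⬝ᵥ μs) ≤ B)
    (D : ℕ → Ω → Set (Fin d → ℝ)) (a astar : ℕ → Ω → Fin d → ℝ) (ε sb : ℕ → Ω → ℝ)
    (hD : ∀ t, 1 ≤ t → ∀ ω, ∀ v ∈ D t ω, Real.sqrt (v ⬝ᵥ v) ≤ A ∧ |v ⬝ᵥ μs| ≤ 1)
    (ha : ∀ t, 1 ≤ t → ∀ ω, a t ω ∈ D t ω)
    (hastar : ∀ t, 1 ≤ t → ∀ ω, astar t ω ∈ D t ω)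
    (hε : WeightedOFUL.BanditNoise P G R a sb ε)
    (hopt : ∀ t, 1 ≤ t → ∀ ω,
      ∃ μt ∈ confSet lam B (betaHat d A R lam δ (fun i => sb i ω) (t - 1))
          (wGram lam (fun i => a i ω) (fun i => sb i ω) (t - 1))
          (wEst lam (fun i => a i ω) (fun i => sb i ω)
            (fun i => μs ⬝ᵥ a i ω + ε i ω) (t - 1)),
        ∀ v ∈ D t ω,
          ∀ μ ∈ confSet lam B (betaHat d A R lam δ (fun i => sb i ω) (t - 1))
              (wGram lam (fun i => a i ω) (fun i => sb i ω) (t - 1))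
              (wEst lam (fun i => a i ω) (fun i => sb i ω)
                (fun i => μs ⬝ᵥ a i ω + ε i ω) (t - 1)),
            v ⬝ᵥ μ ≤ a t ω ⬝ᵥ μt) :
    ENNReal.ofReal (1 - δ) ≤
      P {ω | ∀ T : ℕ, 1 ≤ T →
          ∑ t ∈ Finset.Icc 1 T, (astar t ω ⬝ᵥ μs - a t ω ⬝ᵥ μs) ≤
            4 * (d : ℝ) *
                Real.log (1 + (T : ℝ) * A ^ 2 /
                  ((d : ℝ) * lam * (sbMin (fun i => sb i ω) T) ^ 2)) +
              2 * Real.sqrt (2 * (d : ℝ) *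
                  Real.log (1 + (T : ℝ) * A ^ 2 /
                    ((d : ℝ) * lam * (sbMin (fun i => sb i ω) T) ^ 2))) *
                Real.sqrt (∑ t ∈ Finset.Icc 1 T,
                  (betaHat d A R lam δ (fun i => sb i ω) (t - 1) + Real.sqrt lam * B) ^ 2 *
                    (sb t ω) ^ 2)} := by
  refine (hε.le_measure_forall_mem_confSet hlam hδ0 hδ1 hμB
    fun t ht ω => (hD t ht ω _ (ha t ht ω)).1).trans (measure_mono fun ω hμ T hT => ?_)
  exact WeightedOFUL.regret_le_of_forall_mem_confSet hlam (fun t ht => hD t ht ω)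
    (fun t ht => ha t ht ω) (fun t ht => hastar t ht ω) (fun t ht => hε.weight_pos t ht ω)
    (fun t ht => hopt t ht ω) hμ hT

/-- Regret bound for Weighted OFUL. -/
theorem statement4 {Ω : Type*} {m : MeasurableSpace Ω} (P : Measure Ω) [IsProbabilityMeasure P]
    (G : Filtration ℕ m) {d : ℕ}
    (lam δ B A R : ℝ) (μs : Fin d → ℝ)
    (hlam : 0 < lam) (hδ0 : 0 < δ) (hδ1 : δ < 1) (hμB : Real.sqrt (μs ⬝ᵥ μs) ≤ B)
    (D : ℕ → Ω → Set (Fin d → ℝ)) (a astar : ℕ → Ω → Fin d → ℝ) (ε sb : ℕ → Ω → ℝ)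
    (hD : ∀ t, 1 ≤ t → ∀ ω, ∀ v ∈ D t ω, Real.sqrt (v ⬝ᵥ v) ≤ A ∧ |v ⬝ᵥ μs| ≤ 1)
    (ha : ∀ t, 1 ≤ t → ∀ ω, a t ω ∈ D t ω)
    (hastar : ∀ t, 1 ≤ t → ∀ ω, astar t ω ∈ D t ω)
    (ha_meas : ∀ t, 1 ≤ t → Measurable[G t] (a t))
    (hsb_meas : ∀ t, 1 ≤ t → Measurable[G t] (sb t))
    (hsb_pos : ∀ t, 1 ≤ t → ∀ ω, 0 < sb t ω)
    (hε_meas : ∀ t, 1 ≤ t → Measurable[G (t + 1)] (ε t))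
    (hε_bdd : ∀ t, 1 ≤ t → ∀ᵐ ω ∂P, |ε t ω| ≤ R)
    (hε_mean : ∀ t, 1 ≤ t → P[ε t|G t] =ᵐ[P] 0)
    (hε_var : ∀ t, 1 ≤ t → ∀ᵐ ω ∂P, (P[(fun ω' => ε t ω' ^ 2)|G t]) ω ≤ (sb t ω) ^ 2)
    (hopt : ∀ t, 1 ≤ t → ∀ ω,
      ∃ μt ∈ confSet lam B (betaHat d A R lam δ (fun i => sb i ω) (t - 1))
          (wGram lam (fun i => a i ω) (fun i => sb i ω) (t - 1))
          (wEst lam (fun i => a i ω) (fun i => sb i ω)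
            (fun i => μs ⬝ᵥ a i ω + ε i ω) (t - 1)),
        ∀ v ∈ D t ω,
          ∀ μ ∈ confSet lam B (betaHat d A R lam δ (fun i => sb i ω) (t - 1))
              (wGram lam (fun i => a i ω) (fun i => sb i ω) (t - 1))
              (wEst lam (fun i => a i ω) (fun i => sb i ω)
                (fun i => μs ⬝ᵥ a i ω + ε i ω) (t - 1)),
            v ⬝ᵥ μ ≤ a t ω ⬝ᵥ μt)
    (T : ℕ) (hT : 1 ≤ T) :
    ENNReal.ofReal (1 - δ) ≤
      P {ω |
        ∑ t ∈ Finset.Icc 1 T, (astar t ω ⬝ᵥ μs - a t ω ⬝ᵥ μs) ≤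
          4 * (d : ℝ) *
              Real.log (1 + (T : ℝ) * A ^ 2 /
                ((d : ℝ) * lam * (sbMin (fun i => sb i ω) T) ^ 2)) +
            2 * Real.sqrt (2 * (d : ℝ) *
                Real.log (1 + (T : ℝ) * A ^ 2 /
                  ((d : ℝ) * lam * (sbMin (fun i => sb i ω) T) ^ 2))) *
              Real.sqrt (∑ t ∈ Finset.Icc 1 T,
                (betaHat d A R lam δ (fun i => sb i ω) (t - 1) + Real.sqrt lam * B) ^ 2 *
                  (sb t ω) ^ 2)} :=
  (statement4_general P G lam δ B A R μs hlam hδ0 hδ1.le hμB D a astar ε sb hD ha hastar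
    ⟨ha_meas, hsb_meas, hsb_pos, hε_meas, hε_bdd, hε_mean, hε_var⟩ hopt).trans
    (measure_mono fun _ hω => hω T hT)
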